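/- Fix integers m ≥ 1, d ≥ 2, a matrix S as below, and a real ε > 0. There exist δ > 0 and a constant c > 0, depending only on d, m and ε, such that the following holds. Let p be a prime, 𝓕 ∈ 𝔉(S,m) over F_p a system of total degree d with s_{0,1}·s_{1,2}⋯s_{m−1,m} ≠ 0, and let {w_n} = {(u_{n,0},…,u_{n,m})} be the sequence generated by iterating 𝓕 from some initial vector, assumed purely periodic with period τ. Then for every positive integer N with τ ≥ N ≥ p^{m+ε} and every vector b = (b_0,…,b_m) ∈ F_p^{m+1} with b ≠ 0, |T_b(N)| ≤ c·N·p^{−δ}. -/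

import Mathlib

open MvPolynomial

/-- Membership of a polynomial system `F = (F_0, …, F_m)` over `R` in the class `𝔉(S,m)`,
where `s i j` records the entries of the upper triangular matrix `S` (for `i < j`). -/
def IsFSystem {R : Type*} [CommRing R] (m : ℕ) (s : ℕ → ℕ → ℕ)
    (F : Fin (m + 1) → MvPolynomial (Fin (m + 1)) R) : Prop :=
  (∃ g h : R, g ≠ 0 ∧
      F (Fin.last m) = MvPolynomial.C g * MvPolynomial.X (Fin.last m) + MvPolynomial.C h) ∧
  ∀ i : Fin (m + 1), (i : ℕ) < m →
    ∃ (G H Gt : MvPolynomial (Fin (m + 1)) R) (g : R),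
      g ≠ 0 ∧
      F i = MvPolynomial.X i * G + H ∧
      (∀ d ∈ G.support, ∀ j : Fin (m + 1), j ≤ i → d j = 0) ∧
      (∀ d ∈ H.support, ∀ j : Fin (m + 1), j ≤ i → d j = 0) ∧
      G = MvPolynomial.C g *
          (∏ j ∈ Finset.univ.filter (fun j : Fin (m + 1) => i < j),
            MvPolynomial.X j ^ s i.val j.val) + Gt ∧
      (∀ d ∈ Gt.support, ∀ j : Fin (m + 1), i < j → d j < s i.val j.val) ∧
      (∀ d ∈ H.support, ∀ j : Fin (m + 1), i < j → d j ≤ s i.val j.val)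

/-- The iterated polynomials `F_i^{(k)}` of a sequence of polynomial systems:
`F_i^{(0)} = X_i` and `F_i^{(k)} = F_{k,i}(F_0^{(k-1)}, …, F_m^{(k-1)})`. -/
noncomputable def iterSys {R : Type*} [CommRing R] (m : ℕ)
    (Fs : ℕ → Fin (m + 1) → MvPolynomial (Fin (m + 1)) R) :
    ℕ → Fin (m + 1) → MvPolynomial (Fin (m + 1)) R
  | 0 => fun i => MvPolynomial.X i
  | k + 1 => fun i => MvPolynomial.bind₁ (iterSys m Fs k) (Fs (k + 1) i)

/-- The additive character `e_p(z) = exp(2πiz/p)` evaluated at an element of `F_p`. -/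
noncomputable def eP (p : ℕ) (x : ZMod p) : ℂ :=
  Complex.exp (2 * Real.pi * Complex.I * (x.val : ℂ) / (p : ℂ))

/-- `e_M(z) = exp(2πiz/M)` for a natural number `z`. -/
noncomputable def eM (M z : ℕ) : ℂ :=
  Complex.exp (2 * Real.pi * Complex.I * (z : ℂ) / (M : ℂ))

/-- The discrepancy of the first `N` points of a sequence in `[0,1)^s`: the supremum over
boxes `B = [a_1,b_1) × ⋯ × [a_s,b_s) ⊆ [0,1)^s` of `|T(B)/N - vol B|`. -/
noncomputable def discrepancy (s N : ℕ) (P : ℕ → Fin s → ℝ) : ℝ :=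
  sSup {D : ℝ | ∃ a b : Fin s → ℝ,
    (∀ j, 0 ≤ a j ∧ a j ≤ b j ∧ b j ≤ 1) ∧
    D = |(((Finset.range N).filter fun n => ∀ j, a j ≤ P n j ∧ P n j < b j).card : ℝ) / N -
        ∏ j, (b j - a j)|}

open scoped Pointwise in
set_option maxHeartbeats 2000000 in
lemma bsg {G : Type*} [AddCommGroup G] [DecidableEq G] (L L' : Finset G) (K : ℝ) (hK : 4 ≤ K)
    (hne : L.Nonempty)
    (hpairs : (L.card : ℝ) ^ 2 ≤ K * ((L ×ˢ L).filter (fun x => x.1 - x.2 ∈ L')).card)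
    (hL' : (L'.card : ℝ) ≤ K * L.card) :
    ∃ A ⊆ L, A.Nonempty ∧ (L.card : ℝ) ≤ K ^ 2 * A.card ∧
      ((A - A).card : ℝ) ≤ K ^ 16 * A.card := by
  classical
  set N : ℝ := (L.card : ℝ) with hN
  have hNpos : 0 < N := by rw [hN]; exact_mod_cast hne.card_pos
  have hK0 : 0 < K := by linarith
  let U : G → Finset G := fun v => L.filter (fun a => a - v ∈ L')
  let cod : G → G → Finset G := fun a a' => L.filter (fun v => a - v ∈ L' ∧ a' - v ∈ L')
  let bad : G → G → Prop := fun a a' => 16 * K ^ 2 * ((cod a a').card : ℝ) < N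
  have bad_symm : ∀ a a', bad a a' → bad a' a := by
    intro a a' h
    have : cod a' a = cod a a' := by
      ext v; simp only [cod, Finset.mem_filter]; tauto
    simp only [bad, this]; exact h
  let B : G → Finset (G × G) := fun v => (U v ×ˢ U v).filter (fun x => bad x.1 x.2)
  -- count edges
  have hE : ((L ×ˢ L).filter (fun x => x.1 - x.2 ∈ L')).card = ∑ v ∈ L, (U v).card := by
    rw [Finset.card_filter, Finset.sum_product_right]
    refine Finset.sum_congr rfl fun v _ => ?_
    rw [← Finset.card_filter]
  have hE' : N ^ 2 ≤ K * ∑ v ∈ L, ((U v).card : ℝ) := by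
    rw [hE] at hpairs; push_cast at hpairs; exact hpairs
  have hCS : (∑ v ∈ L, ((U v).card : ℝ)) ^ 2 ≤ N * ∑ v ∈ L, ((U v).card : ℝ) ^ 2 :=
    sq_sum_le_card_mul_sum_sq
  have hSq : N ^ 3 ≤ K ^ 2 * ∑ v ∈ L, ((U v).card : ℝ) ^ 2 := by
    have h1 : (N ^ 2) ^ 2 ≤ (K * ∑ v ∈ L, ((U v).card : ℝ)) ^ 2 :=
      pow_le_pow_left₀ (by positivity) hE' 2
    have h2 : N * N ^ 3 ≤ N * (K ^ 2 * ∑ v ∈ L, ((U v).card : ℝ) ^ 2) := by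
      nlinarith [mul_le_mul_of_nonneg_left hCS (by positivity : (0:ℝ) ≤ K ^ 2)]
    exact le_of_mul_le_mul_left h2 hNpos
  have hBad : 16 * K ^ 2 * ∑ v ∈ L, ((B v).card : ℝ) ≤ N ^ 3 := by
    have h1 : ∑ v ∈ L, (B v).card
        = ∑ x ∈ (L ×ˢ L).filter (fun x => bad x.1 x.2), (cod x.1 x.2).card := by
      have : ∀ v ∈ L, (B v).card = ∑ x ∈ (L ×ˢ L).filter (fun x => bad x.1 x.2),
          if (x.1 - v ∈ L' ∧ x.2 - v ∈ L') then 1 else 0 := by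
        intro v _
        rw [← Finset.card_filter]
        congr 1
        ext x
        simp only [B, U, Finset.mem_filter, Finset.mem_product]
        tauto
      rw [Finset.sum_congr rfl this, Finset.sum_comm]
      refine Finset.sum_congr rfl fun x _ => ?_
      rw [← Finset.card_filter]
    have h2 : ∑ v ∈ L, ((B v).card : ℝ)
        = ∑ x ∈ (L ×ˢ L).filter (fun x => bad x.1 x.2), ((cod x.1 x.2).card : ℝ) := by
      exact_mod_cast h1
    rw [h2, Finset.mul_sum]
    calc _ ≤ ∑ x ∈ (L ×ˢ L).filter (fun x => bad x.1 x.2), N := by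
          refine Finset.sum_le_sum fun x hx => ?_
          exact ((Finset.mem_filter.1 hx).2).le
      _ = (((L ×ˢ L).filter (fun x => bad x.1 x.2)).card : ℝ) * N := by simp
      _ ≤ ((L ×ˢ L).card : ℝ) * N := by
          gcongr; exact Finset.filter_subset _ _
      _ = N ^ 3 := by rw [Finset.card_product]; push_cast; ring
  obtain ⟨v, hvL, hv⟩ : ∃ v ∈ L, N ^ 2 ≤ 2 * K ^ 2 * (((U v).card : ℝ) ^ 2 - 8 * (B v).card) := by
    refine Finset.exists_le_of_sum_le hne ?_
    rw [← Finset.mul_sum, Finset.sum_sub_distrib, ← Finset.mul_sum]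
    simp only [Finset.sum_const, nsmul_eq_mul]
    nlinarith
  set u : ℝ := ((U v).card : ℝ) with hu
  have hu0 : 0 ≤ u := by positivity
  have hB0 : (0:ℝ) ≤ (B v).card := by positivity
  have huN : N ≤ 2 * K * u := by
    refine (pow_le_pow_iff_left₀ hNpos.le (by positivity) (two_ne_zero)).1 ?_
    nlinarith [mul_nonneg (sq_nonneg K) hB0, mul_nonneg (sq_nonneg K) (sq_nonneg u)]
  have hupos : 0 < u := by
    by_contra h
    have : u = 0 := by linarith
    rw [this] at huN; linarith
  have hBu : 8 * ((B v).card : ℝ) ≤ u ^ 2 := by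
    by_contra h
    push Not at h
    have : 2 * K ^ 2 * (u ^ 2 - 8 * (B v).card) < 0 := by
      apply mul_neg_of_pos_of_neg (by positivity); linarith
    nlinarith [sq_nonneg N]
  let A : Finset G := (U v).filter (fun a => 4 * (((U v).filter (fun w => bad a w)).card : ℝ) ≤ u)
  have hAU : A ⊆ U v := Finset.filter_subset _ _
  have hAL : A ⊆ L := hAU.trans (Finset.filter_subset _ _)
  have hAcard : u ≤ 2 * A.card := by
    have h1 : (((U v) \ A).card : ℝ) * u ≤ 4 * (B v).card := by
      have h2 : (B v).card = ∑ a ∈ U v, ((U v).filter (fun w => bad a w)).card := by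
        simp only [B]
        rw [Finset.card_filter, Finset.sum_product]
        refine Finset.sum_congr rfl fun v _ => ?_
        rw [← Finset.card_filter]
      have h3 : (4 : ℝ) * (B v).card = ∑ a ∈ U v, 4 * (((U v).filter (fun w => bad a w)).card : ℝ) := by
        rw [h2]; push_cast; rw [Finset.mul_sum]
      rw [h3]
      calc _ = ∑ a ∈ (U v) \ A, u := by simp
        _ ≤ ∑ a ∈ (U v) \ A, 4 * (((U v).filter (fun w => bad a w)).card : ℝ) := by
          refine Finset.sum_le_sum fun a ha => ?_
          simp only [A, Finset.mem_sdiff, Finset.mem_filter, not_and, not_le] at ha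
          exact (ha.2 ha.1).le
        _ ≤ _ := Finset.sum_le_sum_of_subset_of_nonneg Finset.sdiff_subset
            (fun _ _ _ => by positivity)
    have h4 : (((U v) \ A).card : ℝ) * u ≤ (u / 2) * u := by nlinarith
    have h5 := le_of_mul_le_mul_right h4 hupos
    have h6 : (((U v) \ A).card : ℝ) + A.card = u := by
      rw [hu]; exact_mod_cast Finset.card_sdiff_add_card_eq_card hAU
    linarith
  have hApos : (0:ℝ) < A.card := by linarith
  have hAne : A.Nonempty := by
    rw [← Finset.card_pos]; exact_mod_cast hApos
  have hNA : N ≤ 4 * K * A.card := by nlinarith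
  refine ⟨A, hAL, hAne, ?_, ?_⟩
  · nlinarith
  -- representation count
  have hrep : ∀ x ∈ A - A, u / 2 * (N / (16 * K ^ 2)) ^ 2 ≤
      (((L' ×ˢ L') ×ˢ (L' ×ˢ L')).filter
        (fun y : (G × G) × (G × G) => y.1.1 - y.1.2 + (y.2.1 - y.2.2) = x)).card := by
    intro x hx
    obtain ⟨a, ha, a', ha', rfl⟩ := Finset.mem_sub.1 hx
    let W : Finset G := (U v).filter (fun w => ¬ bad a w ∧ ¬ bad a' w)
    have hW : u / 2 ≤ W.card := by
      have h1 : (U v) ⊆ W ∪ ((U v).filter (fun w => bad a w) ∪ (U v).filter (fun w => bad a' w)) := by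
        intro w hw
        simp only [W, Finset.mem_union, Finset.mem_filter]
        tauto
      have h2 := (Finset.card_le_card h1).trans ((Finset.card_union_le _ _).trans
        (Nat.add_le_add_left (Finset.card_union_le _ _) _))
      have h3 : u ≤ W.card + ((((U v).filter (fun w => bad a w)).card : ℝ) +
          (((U v).filter (fun w => bad a' w)).card : ℝ)) := by
        rw [hu]; exact_mod_cast h2
      have h4 := (Finset.mem_filter.1 ha).2
      have h5 := (Finset.mem_filter.1 ha').2
      linarith
    let T : Finset (Σ _ : G, G × G) := W.sigma (fun w => cod a w ×ˢ cod a' w)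
    have hT : u / 2 * (N / (16 * K ^ 2)) ^ 2 ≤ T.card := by
      rw [Finset.card_sigma]
      push_cast
      calc u / 2 * (N / (16 * K ^ 2)) ^ 2 ≤ W.card * (N / (16 * K ^ 2)) ^ 2 := by gcongr
        _ = ∑ w ∈ W, (N / (16 * K ^ 2)) ^ 2 := by simp
        _ ≤ _ := by
          refine Finset.sum_le_sum fun w hw => ?_
          rw [Finset.card_product, sq]
          push_cast
          have h := (Finset.mem_filter.1 hw).2
          have h1 : N / (16 * K ^ 2) ≤ (cod a w).card := by
            rw [div_le_iff₀ (by positivity), mul_comm]; exact not_lt.1 h.1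
          have h2 : N / (16 * K ^ 2) ≤ (cod a' w).card := by
            rw [div_le_iff₀ (by positivity), mul_comm]; exact not_lt.1 h.2
          gcongr
    refine hT.trans ?_
    norm_cast
    refine Finset.card_le_card_of_injOn
      (fun t => ((a - t.2.1, t.1 - t.2.1), (t.1 - t.2.2, a' - t.2.2))) ?_ ?_
    · rintro ⟨w, z, z'⟩ ht
      simp only [T, cod, Finset.coe_sigma, Set.mem_sigma_iff, Finset.mem_coe, Finset.mem_product,
        Finset.mem_filter] at ht ⊢
      refine ⟨⟨⟨ht.2.1.2.1, ht.2.1.2.2⟩, ht.2.2.2.2, ht.2.2.2.1⟩, ?_⟩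
      abel
    · rintro ⟨w, z, z'⟩ _ ⟨w1, z1, z1'⟩ _ h
      simp only [Prod.mk.injEq, sub_right_inj] at h
      obtain ⟨⟨rfl, h2⟩, h3, rfl⟩ := h
      have : w = w1 := by simpa using h2
      subst this; rfl
  have hsum : ((A - A).card : ℝ) * (u / 2 * (N / (16 * K ^ 2)) ^ 2) ≤ (L'.card : ℝ) ^ 4 := by
    have h1 := Finset.card_nsmul_le_sum (A - A) (fun x => ((((L' ×ˢ L') ×ˢ (L' ×ˢ L')).filter
        (fun y : (G × G) × (G × G) => y.1.1 - y.1.2 + (y.2.1 - y.2.2) = x)).card : ℝ)) _ hrep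
    rw [nsmul_eq_mul] at h1
    refine h1.trans ?_
    have h2 : ∑ x ∈ A - A, (((L' ×ˢ L') ×ˢ (L' ×ˢ L')).filter
        (fun y : (G × G) × (G × G) => y.1.1 - y.1.2 + (y.2.1 - y.2.2) = x)).card
        ≤ ((L' ×ˢ L') ×ˢ (L' ×ˢ L')).card :=
      (Finset.sum_card_fiberwise_eq_card_filter _ _ _).trans_le (Finset.card_filter_le _ _)
    calc _ ≤ (((L' ×ˢ L') ×ˢ (L' ×ˢ L')).card : ℝ) := by exact_mod_cast h2
      _ = _ := by simp only [Finset.card_product]; push_cast; ring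
  have hL4 : (L'.card : ℝ) ^ 4 ≤ (K * N) ^ 4 := pow_le_pow_left₀ (by positivity) hL' 4
  have h7 : ((A - A).card : ℝ) * u * N ^ 2 ≤ 512 * K ^ 8 * N ^ 4 := by
    have h8 := hsum.trans hL4
    have h9 : ((A - A).card : ℝ) * (u / 2 * (N / (16 * K ^ 2)) ^ 2)
       = (((A - A).card : ℝ) * u * N ^ 2) / (512 * K ^ 4) := by
      field_simp; ring
    rw [h9, div_le_iff₀ (by positivity)] at h8
    nlinarith
  have h10 : ((A - A).card : ℝ) * u ≤ 512 * K ^ 8 * N ^ 2 := by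
    have : ((A - A).card : ℝ) * u * N ^ 2 ≤ 512 * K ^ 8 * N ^ 2 * N ^ 2 := by nlinarith
    exact le_of_mul_le_mul_right this (by positivity)
  have h11 : ((A - A).card : ℝ) * u ≤ (1024 * K ^ 9 * N) * u := by
    refine h10.trans ?_
    have := mul_le_mul_of_nonneg_left huN (by positivity : (0:ℝ) ≤ 512 * K ^ 8 * N)
    nlinarith
  have h12 := le_of_mul_le_mul_right h11 hupos
  calc ((A - A).card : ℝ) ≤ 1024 * K ^ 9 * N := h12
    _ ≤ 1024 * K ^ 9 * (4 * K * A.card) := by gcongr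
    _ = 4 ^ 6 * K ^ 10 * A.card := by ring
    _ ≤ K ^ 6 * K ^ 10 * A.card := by gcongr
    _ = K ^ 16 * A.card := by ring

open scoped Pointwise in
/-- Approximate stabilizer: `x` with `|A - xA| ≤ M|A|`. -/
def InR {F : Type*} [Field F] [DecidableEq F] (A : Finset F) (M : ℝ) (x : F) : Prop :=
  ((A - A.image (fun a => x * a)).card : ℝ) ≤ M * A.card

section InRsec
open scoped Pointwise
variable {F : Type*} [Field F] [DecidableEq F]

lemma dil_sub (x : F) (A B : Finset F) :
    A.image (fun a => x * a) - B.image (fun a => x * a) = (A - B).image (fun a => x * a) := by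
  ext z
  simp only [Finset.mem_sub, Finset.mem_image]
  constructor
  · rintro ⟨_, ⟨a, ha, rfl⟩, _, ⟨b, hb, rfl⟩, rfl⟩
    exact ⟨a - b, ⟨a, ha, b, hb, rfl⟩, by ring⟩
  · rintro ⟨_, ⟨a, ha, b, hb, rfl⟩, rfl⟩
    exact ⟨_, ⟨a, ha, rfl⟩, _, ⟨b, hb, rfl⟩, by ring⟩

lemma dil_card {x : F} (hx : x ≠ 0) (A : Finset F) : (A.image (fun a => x * a)).card = A.card :=
  Finset.card_image_of_injective _ (mul_right_injective₀ hx)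

lemma sub_card_comm (A B : Finset F) : (A - B).card = (B - A).card := by
  rw [← Finset.card_neg, neg_sub]

lemma dil_dil (x y : F) (A : Finset F) :
    (A.image (fun a => y * a)).image (fun a => x * a) = A.image (fun a => x * y * a) := by
  rw [Finset.image_image]; congr 1; ext a; simp [mul_assoc]

lemma InR.mono {A : Finset F} {M M' : ℝ} {x : F} (h : InR A M x) (hM : M ≤ M') : InR A M' x :=
  le_trans h (by gcongr)

lemma InR.zero {A : Finset F} {M : ℝ} (hM : 1 ≤ M) : InR A M 0 := by
  unfold InR
  rcases A.eq_empty_or_nonempty with rfl | h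
  · simp
  · have : A.image (fun a => 0 * a) = {0} := by
      simp only [zero_mul]; exact Finset.image_const h 0
    rw [this, Finset.sub_singleton]
    have h2 : (A.image (fun x => x - 0)).card = A.card := by simp
    rw [h2]
    nlinarith [(Nat.cast_nonneg A.card : (0:ℝ) ≤ A.card)]

lemma InR.mul {A : Finset F} (hA : A.Nonempty) {M M' : ℝ} {x y : F} (hM : 1 ≤ M) (hM' : 1 ≤ M')
    (hx : InR A M x) (hy : InR A M' y) : InR A (M * M') (x * y) := by
  rcases eq_or_ne x 0 with rfl | hx0
  · rw [zero_mul]; exact InR.zero (by nlinarith)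
  have h := Finset.ruzsa_triangle_inequality_sub_sub_sub A (A.image (fun a => x * a))
    (A.image (fun a => x * y * a))
  rw [dil_card hx0, ← dil_dil, dil_sub, dil_card hx0, sub_card_comm (A.image _) A] at h
  have h' : ((A - A.image (fun a => x * y * a)).card : ℝ) * A.card ≤
      (M * A.card) * (M' * A.card) := by
    rw [← dil_dil]
    refine le_trans (by exact_mod_cast h) (mul_le_mul hx hy (by positivity) (by positivity))
  have hpos : (0:ℝ) < A.card := by exact_mod_cast hA.card_pos
  refine le_of_mul_le_mul_right (le_trans h' (le_of_eq (by ring))) hpos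

lemma InR.inv {A : Finset F} {M : ℝ} {x : F} (hM : 1 ≤ M) (hx : InR A M x) : InR A M x⁻¹ := by
  rcases eq_or_ne x 0 with rfl | hx0
  · rw [inv_zero]; exact InR.zero hM
  unfold InR at *
  have : (A - A.image (fun a => x * a)).card = (A - A.image (fun a => x⁻¹ * a)).card := by
    rw [sub_card_comm A (A.image (fun a => x⁻¹ * a)), ← dil_card hx0 (A.image _ - A), ← dil_sub, dil_dil,
      mul_inv_cancel₀ hx0]
    simp
  rw [← this]; exact hx

lemma InR.cover {A : Finset F} (hA : A.Nonempty) {M : ℝ} {x : F} (hx : InR A M x) :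
    ∃ T : Finset F, (T.card : ℝ) ≤ M ∧ ∀ a ∈ A, ∃ t ∈ T, ∃ b ∈ A, ∃ c ∈ A, x * a = t + (b - c) := by
  have h : (((A.image (fun a => -(x * a))) + A).card : ℝ) ≤ M * A.card := by
    refine le_trans ?_ hx
    norm_cast
    refine Finset.card_le_card ?_
    intro z hz
    simp only [Finset.mem_add, Finset.mem_sub, Finset.mem_image] at hz ⊢
    obtain ⟨_, ⟨a, ha, rfl⟩, b, hb, rfl⟩ := hz
    exact ⟨b, hb, _, ⟨a, ha, rfl⟩, by ring⟩
  obtain ⟨T, -, hT, hsub⟩ := Finset.ruzsa_covering_add hA h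
  refine ⟨-T, by simpa using hT, fun a ha => ?_⟩
  have := hsub (Finset.mem_image_of_mem _ ha)
  simp only [Finset.mem_add, Finset.mem_sub] at this
  obtain ⟨t, ht, _, ⟨b, hb, c, hc, rfl⟩, h2⟩ := this
  exact ⟨-t, by simpa using ht, c, hc, b, hb, by linear_combination h2⟩

set_option maxHeartbeats 1000000 in
lemma InR.lin {A : Finset F} (hA : A.Nonempty) {M : ℝ} {x y : F} (e : F) (he : e = 1 ∨ e = -1)
    (h1 : InR A M 1) (hx : InR A M x) (hy : InR A M y) : InR A (M ^ 7) (x + e * y) := by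
  obtain ⟨T, hT, hTc⟩ := hx.cover hA
  obtain ⟨T', hT', hTc'⟩ := hy.cover hA
  have hpos : (0:ℝ) < A.card := by exact_mod_cast hA.card_pos
  have h5 : ((3 • A - 2 • A).card : ℝ) ≤ M ^ 5 * A.card := by
    have h := Finset.pluennecke_ruzsa_inequality_nsmul_sub_nsmul_sub hA A 3 2
    have h' : ((3 • A - 2 • A).card : ℝ) ≤ ((A - A).card / A.card : ℝ) ^ (3 + 2) * A.card := by
      have h3 := (NNRat.cast_le (K := ℝ)).2 h
      push_cast at h3
      exact h3
    refine h'.trans ?_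
    gcongr
    rw [div_le_iff₀ hpos]
    unfold InR at h1
    simpa using h1
  have hsub : A - A.image (fun a => (x + e * y) * a) ⊆
      (T ×ˢ T' ×ˢ (3 • A - 2 • A)).image (fun z => - z.1 - e * z.2.1 + z.2.2) := by
    intro z hz
    simp only [Finset.mem_sub, Finset.mem_image] at hz
    obtain ⟨a, ha, _, ⟨a', ha', rfl⟩, rfl⟩ := hz
    obtain ⟨t, ht, b, hb, c, hc, h2⟩ := hTc a' ha'
    obtain ⟨t', ht', b', hb', c', hc', h3⟩ := hTc' a' ha'
    have key : ∀ w1 ∈ A, ∀ w2 ∈ A, ∀ w3 ∈ A, ∀ w4 ∈ A, ∀ w5 ∈ A,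
        w1 + w2 + w3 - (w4 + w5) ∈ 3 • A - 2 • A := by
      intro w1 k1 w2 k2 w3 k3 w4 k4 w5 k5
      refine Finset.sub_mem_sub ?_ ?_
      · have : (3 • A) = A + A + A := by rw [show (3:ℕ) = 2 + 1 from rfl, add_nsmul, two_nsmul, one_nsmul]
        rw [this]
        exact Finset.add_mem_add (Finset.add_mem_add k1 k2) k3
      · rw [two_nsmul]; exact Finset.add_mem_add k4 k5
    rw [Finset.mem_image]
    rcases he with rfl | rfl
    · refine ⟨(t, t', a + c + c' - (b + b')), ?_, ?_⟩
      · simp only [Finset.mem_product]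
        exact ⟨ht, ht', key _ ha _ hc _ hc' _ hb _ hb'⟩
      · simp only; linear_combination h2 + h3
    · refine ⟨(t, t', a + c + b' - (b + c')), ?_, ?_⟩
      · simp only [Finset.mem_product]
        exact ⟨ht, ht', key _ ha _ hc _ hb' _ hb _ hc'⟩
      · simp only; linear_combination h2 - h3
  have hc := (Finset.card_le_card hsub).trans Finset.card_image_le
  rw [Finset.card_product, Finset.card_product] at hc
  unfold InR
  have hM0 : 0 ≤ M := le_trans (by positivity) hT
  calc _ ≤ (T.card : ℝ) * (T'.card * (3 • A - 2 • A).card) := by exact_mod_cast hc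
    _ ≤ M * (M * (M ^ 5 * A.card)) := by gcongr
    _ = M ^ 7 * A.card := by ring

lemma InR.add {A : Finset F} (hA : A.Nonempty) {M : ℝ} {x y : F}
    (h1 : InR A M 1) (hx : InR A M x) (hy : InR A M y) : InR A (M ^ 7) (x + y) := by
  simpa using InR.lin hA 1 (Or.inl rfl) h1 hx hy

lemma InR.sub {A : Finset F} (hA : A.Nonempty) {M : ℝ} {x y : F}
    (h1 : InR A M 1) (hx : InR A M x) (hy : InR A M y) : InR A (M ^ 7) (x - y) := by
  have := InR.lin hA (-1) (Or.inr rfl) h1 hx hy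
  rwa [neg_one_mul, ← sub_eq_add_neg] at this

end InRsec

lemma InR.grow {p : ℕ} [Fact p.Prime] {A : Finset (ZMod p)} (hA : A.Nonempty) (n : ℕ) :
    ∀ (M : ℝ) (_ : 1 ≤ M) (_ : InR A M 1) (X : Finset (ZMod p)) (_ : ∀ x ∈ X, InR A M x)
      (_ : 2 ≤ X.card) (_ : p ≤ X.card ^ 2 ^ n), ∀ x, InR A (M ^ 693 ^ n) x := by
  induction n with
  | zero =>
    intro M hM h1 X hX _ hp x
    have : X = Finset.univ := by
      apply Finset.eq_univ_of_card
      apply le_antisymm (Finset.card_le_univ _)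
      rw [ZMod.card]; simpa using hp
    have hx := hX x (by rw [this]; exact Finset.mem_univ _)
    simpa using hx
  | succ n ih =>
    intro M hM h1 X hX h2 hp
    have hpw : ∀ {a b : ℕ}, a ≤ b → M ^ a ≤ M ^ b := fun h => pow_le_pow_right₀ hM h
    have hM7 : 1 ≤ M ^ 7 := one_le_pow₀ hM
    have hM14 : 1 ≤ M ^ 14 := one_le_pow₀ hM
    let Q : ZMod p → Prop := fun q =>
      ∃ a ∈ X, ∃ b ∈ X, ∃ c ∈ X, ∃ d ∈ X, c ≠ d ∧ q = (a - b) / (c - d)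
    have hQ : ∀ q, Q q → InR A (M ^ 14) q := by
      rintro q ⟨a, ha, b, hb, c, hc, d, hd, hcd, rfl⟩
      have := InR.mul hA hM7 hM7 (InR.sub hA h1 (hX a ha) (hX b hb))
        ((InR.sub hA h1 (hX c hc) (hX d hd)).inv hM7)
      rw [← pow_add] at this
      rwa [div_eq_mul_inv]
    by_cases hall : ∀ q, Q q
    · intro x
      refine (hQ x (hall x)).mono (hpw ?_)
      calc 14 ≤ 693 ^ 1 := by norm_num
        _ ≤ 693 ^ (n + 1) := Nat.pow_le_pow_right (by norm_num) (by omega)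
    · obtain ⟨q, hq, hq1⟩ : ∃ q, Q q ∧ ¬ Q (q + 1) := by
        by_contra hcon
        push Not at hcon
        apply hall
        have h0 : Q 0 := by
          obtain ⟨a, ha, b, hb, hab⟩ := Finset.one_lt_card.1 h2
          exact ⟨a, ha, a, ha, a, ha, b, hb, hab, by simp⟩
        have : ∀ k : ℕ, Q (k : ZMod p) := by
          intro k
          induction k with
          | zero => simpa using h0
          | succ k ihk => push_cast; exact hcon _ ihk
        intro q
        have := this q.val
        rwa [ZMod.natCast_zmod_val] at this
      set ξ := q + 1 with hξ
      have h1' : InR A (M ^ 14) 1 := h1.mono (by simpa using hpw (show 1 ≤ 14 by norm_num))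
      have hξR : InR A (M ^ 98) ξ := by
        have := InR.add hA h1' (hQ q hq) h1'
        rwa [← pow_mul] at this
      let X' : Finset (ZMod p) := (X ×ˢ X).image (fun z => z.1 + ξ * z.2)
      have hcard : X'.card = X.card ^ 2 := by
        rw [Finset.card_image_of_injOn, Finset.card_product, sq]
        rintro ⟨a, b⟩ hab ⟨a', b'⟩ hab' heq
        simp only [Finset.coe_product, Set.mem_prod, Finset.mem_coe] at hab hab' heq
        by_cases hb : b = b'
        · subst hb
          have : a = a' := by simpa using heq
          rw [this]
        · exfalso
          apply hq1
          refine ⟨a, hab.1, a', hab'.1, b', hab'.2, b, hab.2, Ne.symm hb, ?_⟩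
          rw [eq_div_iff (sub_ne_zero.2 (Ne.symm hb))]
          linear_combination -heq
      have hX' : ∀ x ∈ X', InR A (M ^ 693) x := by
        intro x hx
        obtain ⟨⟨a, b⟩, hab, rfl⟩ := Finset.mem_image.1 hx
        rw [Finset.mem_product] at hab
        have hξb := InR.mul hA (one_le_pow₀ hM) hM hξR (hX b hab.2)
        rw [← pow_succ] at hξb
        have hM99 : M ≤ M ^ (98 + 1) := by simpa using hpw (show 1 ≤ 99 by norm_num)
        have := InR.add hA (h1.mono hM99) ((hX a hab.1).mono hM99) hξb
        rwa [← pow_mul] at this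
      intro x
      have := ih (M ^ 693) (one_le_pow₀ hM)
        (h1.mono (by simpa using hpw (show 1 ≤ 693 by norm_num))) X' hX'
        (by rw [hcard]; nlinarith) (by rw [hcard, ← pow_mul]; rwa [pow_succ' 2 n] at hp) x
      rwa [← pow_mul, ← pow_succ'] at this

open scoped Pointwise in
set_option maxHeartbeats 2000000 in
lemma InR.final {p : ℕ} [Fact p.Prime] {A : Finset (ZMod p)} (hA : A.Nonempty) (M : ℝ) (hM : 1 ≤ M)
    (h : ∀ x, InR A M x) : (A.card : ℝ) ≤ 2 * M ∨ (p : ℝ) ≤ 2 * M * A.card := by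
  classical
  have hpos : (0:ℝ) < A.card := by exact_mod_cast hA.card_pos
  let E : ZMod p → Finset ((ZMod p × ZMod p) × (ZMod p × ZMod p)) := fun x =>
    ((A ×ˢ A) ×ˢ (A ×ˢ A)).filter (fun y => y.1.1 - x * y.1.2 = y.2.1 - x * y.2.2)
  have hE : ∀ x, (A.card : ℝ) ^ 3 ≤ M * (E x).card := by
    intro x
    let D := A - A.image (fun a => x * a)
    let r : ZMod p → Finset (ZMod p × ZMod p) := fun z => (A ×ˢ A).filter (fun y => y.1 - x * y.2 = z)
    have h1 : ∑ z ∈ D, (r z).card = A.card ^ 2 := by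
      rw [sq, ← Finset.card_product, Finset.card_eq_sum_card_fiberwise (f := fun y => y.1 - x * y.2) (t := D)]
      intro y hy
      simp only [Finset.coe_product, Set.mem_prod, Finset.mem_coe] at hy
      exact Finset.sub_mem_sub hy.1 (Finset.mem_image_of_mem _ hy.2)
    have h2 : ∑ z ∈ D, (r z).card ^ 2 ≤ (E x).card := by
      have : ∀ z ∈ D, (r z).card ^ 2 = ((E x).filter (fun y => y.1.1 - x * y.1.2 = z)).card := by
        intro z _
        rw [sq, ← Finset.card_product]
        congr 1
        ext y
        simp only [r, E, Finset.mem_product, Finset.mem_filter]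
        constructor
        · rintro ⟨⟨h1, h2⟩, h3, h4⟩; exact ⟨⟨⟨h1, h3⟩, by rw [h2, h4]⟩, h2⟩
        · rintro ⟨⟨⟨h1, h3⟩, h5⟩, h2⟩; exact ⟨⟨h1, h2⟩, h3, by rw [← h5, h2]⟩
      rw [Finset.sum_congr rfl this]
      exact (Finset.sum_card_fiberwise_eq_card_filter _ _ _).trans_le (Finset.card_filter_le _ _)
    have h3 : (∑ z ∈ D, ((r z).card : ℝ)) ^ 2 ≤ D.card * ∑ z ∈ D, ((r z).card : ℝ) ^ 2 :=
      sq_sum_le_card_mul_sum_sq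
    have h1' : ∑ z ∈ D, ((r z).card : ℝ) = (A.card : ℝ) ^ 2 := by exact_mod_cast h1
    have h2' : ∑ z ∈ D, ((r z).card : ℝ) ^ 2 ≤ (E x).card := by exact_mod_cast h2
    have h4 : (D.card : ℝ) ≤ M * A.card := h x
    rw [h1'] at h3
    have h5 : (A.card : ℝ) * (A.card : ℝ) ^ 3 ≤ A.card * (M * (E x).card) := by
      calc _ = ((A.card : ℝ) ^ 2) ^ 2 := by ring
        _ ≤ _ := h3
        _ ≤ (M * A.card) * (E x).card := by gcongr
        _ = _ := by ring
    exact le_of_mul_le_mul_left h5 hpos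
  have hS : ∑ x, ((E x).card : ℝ) ≤ p * (A.card : ℝ) ^ 2 + (A.card : ℝ) ^ 4 := by
    have h1 : ∑ x, (E x).card = ∑ y ∈ (A ×ˢ A) ×ˢ (A ×ˢ A),
        (Finset.univ.filter (fun x : ZMod p => y.1.1 - x * y.1.2 = y.2.1 - x * y.2.2)).card := by
      simp only [E, Finset.card_filter]
      rw [Finset.sum_comm]
    have h2 : ∀ y ∈ (A ×ˢ A) ×ˢ (A ×ˢ A),
        (Finset.univ.filter (fun x : ZMod p => y.1.1 - x * y.1.2 = y.2.1 - x * y.2.2)).card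
        ≤ 1 + if y.1 = y.2 then p else 0 := by
      rintro ⟨⟨a, b⟩, ⟨c, d⟩⟩ _
      by_cases hbd : b = d
      · by_cases hac : a = c
        · simp only [hbd, hac, if_true]
          refine (Finset.card_le_univ _).trans ?_
          rw [ZMod.card]; omega
        · subst hbd
          simp [hac]
      · refine le_trans ?_ (Nat.le_add_right _ _)
        rw [Finset.card_le_one]
        intro x hx y hy
        simp only [Finset.mem_filter, Finset.mem_univ, true_and] at hx hy
        have : (x - y) * (b - d) = 0 := by linear_combination hy - hx
        rcases mul_eq_zero.1 this with h | h
        · exact sub_eq_zero.1 h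
        · exact absurd (sub_eq_zero.1 h) hbd
    have h3 : ∑ x, (E x).card ≤ A.card ^ 4 + A.card ^ 2 * p := by
      rw [h1]
      refine (Finset.sum_le_sum h2).trans ?_
      rw [Finset.sum_add_distrib, Finset.sum_const, ← Finset.sum_filter, Finset.sum_const]
      simp only [Finset.card_product, smul_eq_mul, mul_one]
      have : (((A ×ˢ A) ×ˢ (A ×ˢ A)).filter (fun y => y.1 = y.2)).card ≤ A.card ^ 2 := by
        rw [sq, ← Finset.card_product]
        refine Finset.card_le_card_of_injOn (fun y => y.1) ?_ ?_
        · intro y hy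
          simp only [Finset.coe_filter, Set.mem_setOf_eq, Finset.mem_product] at hy
          simp only [Finset.coe_product, Set.mem_prod, Finset.mem_coe]
          exact hy.1.1
        · intro y hy z hz h
          simp only [Finset.coe_filter, Set.mem_setOf_eq] at hy hz
          exact Prod.ext h (by rw [← hy.2, ← hz.2]; exact h)
      nlinarith
    have h4 : ∑ x, ((E x).card : ℝ) ≤ (A.card : ℝ) ^ 4 + (A.card : ℝ) ^ 2 * p := by exact_mod_cast h3
    linarith
  have hT : (p : ℝ) * (A.card : ℝ) ^ 3 ≤ M * (p * (A.card : ℝ) ^ 2 + (A.card : ℝ) ^ 4) := by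
    calc (p : ℝ) * (A.card : ℝ) ^ 3 = ∑ x : ZMod p, (A.card : ℝ) ^ 3 := by
          simp [ZMod.card]
      _ ≤ ∑ x, M * ((E x).card : ℝ) := Finset.sum_le_sum fun x _ => hE x
      _ = M * ∑ x, ((E x).card : ℝ) := by rw [Finset.mul_sum]
      _ ≤ _ := by gcongr
  have hT2 : (p : ℝ) * A.card ≤ M * (p + (A.card : ℝ) ^ 2) := by
    have : (A.card : ℝ) ^ 2 * ((p : ℝ) * A.card) ≤ (A.card : ℝ) ^ 2 * (M * (p + (A.card : ℝ) ^ 2)) := by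
      nlinarith
    exact le_of_mul_le_mul_left this (by positivity)
  by_contra hcon
  push Not at hcon
  have hp : (0:ℝ) ≤ p := by positivity
  nlinarith [mul_lt_mul_of_pos_right hcon.2 hpos, mul_le_mul_of_nonneg_left hcon.1.le hp]

open scoped Pointwise in
set_option maxHeartbeats 2000000 in
lemma bgk_core {p : ℕ} [Fact p.Prime] (K : ℝ) (hK : 4 ≤ K) (n : ℕ) (H L L' : Finset (ZMod p))
    (h0 : ∀ h ∈ H, h ≠ 0) (hinv : ∀ h ∈ H, ∀ a ∈ L, h * a ∈ L) (hne : L.Nonempty)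
    (hpairs : (L.card : ℝ) ^ 2 ≤ K * ((L ×ˢ L).filter (fun x => x.1 - x.2 ∈ L')).card)
    (hL' : (L'.card : ℝ) ≤ K * L.card)
    (hq : (H.card : ℝ) ≤ L.card) (hLq : (L.card : ℝ) * H.card ≤ K * p)
    (hn : (p : ℝ) ≤ (H.card / K ^ 3) ^ (2 ^ n))
    (hbig : 2 * K ^ (35 * 693 ^ n + 2) < H.card) : False := by
  classical
  obtain ⟨A, hAL, hA, hLA, hAA⟩ := bsg L L' K hK hne hpairs hL'
  have hK0 : 0 < K := by linarith
  have hK1 : 1 ≤ K := by linarith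
  obtain ⟨E, hE⟩ : ∃ E : ℕ, E = 693 ^ n := ⟨_, rfl⟩
  have hE1 : 1 ≤ E := by rw [hE]; exact Nat.one_le_pow _ _ (by norm_num)
  rw [← hE] at hbig
  set q : ℝ := (H.card : ℝ) with hqdef
  clear_value q
  have hqpos : 0 < q := lt_trans (by positivity) hbig
  have hHne : H.Nonempty := by
    rw [← Finset.card_pos]; rw [hqdef] at hqpos; exact_mod_cast hqpos
  have hApos : (0:ℝ) < A.card := by exact_mod_cast hA.card_pos
  have hLpos : (0:ℝ) < L.card := by exact_mod_cast hne.card_pos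
  let dl : ZMod p → Finset (ZMod p) := fun h => A.image (fun a => h * a)
  have hdl : ∀ h ∈ H, dl h ⊆ L := by
    intro h hh x hx
    obtain ⟨a, ha, rfl⟩ := Finset.mem_image.1 hx
    exact hinv h hh a (hAL ha)
  let r : ZMod p → ℕ := fun x => (H.filter (fun h => x ∈ dl h)).card
  have hr1 : ∑ x ∈ L, (r x : ℝ) = q * A.card := by
    have : ∑ x ∈ L, r x = ∑ h ∈ H, A.card := by
      simp only [r, Finset.card_filter]
      rw [Finset.sum_comm]
      refine Finset.sum_congr rfl fun h hh => ?_
      rw [← Finset.card_filter, Finset.filter_mem_eq_inter, Finset.inter_eq_right.2 (hdl h hh)]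
      exact dil_card (h0 h hh) A
    rw [Finset.sum_const, smul_eq_mul] at this
    rw [hqdef]
    exact_mod_cast this
  have hr2 : ∑ x ∈ L, (r x : ℝ) ^ 2 = ∑ h ∈ H, ∑ h' ∈ H, ((dl h ∩ dl h').card : ℝ) := by
    have h1 : ∀ x ∈ L, (r x : ℝ) ^ 2 = ∑ h ∈ H, ∑ h' ∈ H, if x ∈ dl h ∩ dl h' then (1:ℝ) else 0 := by
      intro x _
      simp only [r, Finset.card_filter, sq]
      push_cast
      rw [Finset.sum_mul_sum]
      refine Finset.sum_congr rfl fun h _ => Finset.sum_congr rfl fun h' _ => ?_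
      by_cases h1 : x ∈ dl h <;> by_cases h2 : x ∈ dl h' <;> simp [h1, h2]
    rw [Finset.sum_congr rfl h1, Finset.sum_comm]
    refine Finset.sum_congr rfl fun h hh => ?_
    rw [Finset.sum_comm]
    refine Finset.sum_congr rfl fun h' _ => ?_
    rw [Finset.sum_boole, Finset.filter_mem_eq_inter, Finset.inter_eq_right.2]
    exact Finset.inter_subset_left.trans (hdl h hh)
  have hCS : (∑ x ∈ L, (r x : ℝ)) ^ 2 ≤ L.card * ∑ x ∈ L, (r x : ℝ) ^ 2 :=
    sq_sum_le_card_mul_sum_sq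
  rw [hr1, hr2] at hCS
  obtain ⟨h, hh, hsum⟩ : ∃ h ∈ H, q * A.card ≤ K ^ 2 * ∑ h' ∈ H, ((dl h ∩ dl h').card : ℝ) := by
    refine Finset.exists_le_of_sum_le hHne ?_
    rw [Finset.sum_const, nsmul_eq_mul, ← Finset.mul_sum, ← hqdef]
    set S := ∑ h ∈ H, ∑ h' ∈ H, ((dl h ∩ dl h').card : ℝ) with hS
    have hS0 : 0 ≤ S := Finset.sum_nonneg fun _ _ => Finset.sum_nonneg fun _ _ => Nat.cast_nonneg _
    clear_value S
    have : (A.card : ℝ) * (q * (q * A.card)) ≤ A.card * (K ^ 2 * S) := by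
      calc _ = (q * A.card) ^ 2 := by ring
        _ ≤ _ := hCS
        _ ≤ (K ^ 2 * A.card) * S := by gcongr
        _ = _ := by ring
    exact le_of_mul_le_mul_left this hApos
  let H1 : Finset (ZMod p) := H.filter (fun h' => (A.card : ℝ) ≤ 2 * K ^ 2 * (dl h ∩ dl h').card)
  have hH1 : q ≤ 2 * K ^ 2 * H1.card := by
    have h1 : 2 * K ^ 2 * ∑ h' ∈ H, ((dl h ∩ dl h').card : ℝ) ≤
        ∑ h' ∈ H, ((if h' ∈ H1 then 2 * K ^ 2 * (A.card : ℝ) else (0:ℝ)) + (A.card : ℝ)) := by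
      rw [Finset.mul_sum]
      refine Finset.sum_le_sum fun h' hh' => ?_
      by_cases hc : h' ∈ H1
      · rw [if_pos hc]
        have : ((dl h ∩ dl h').card : ℝ) ≤ A.card := by
          have h3 := (Finset.card_le_card (Finset.inter_subset_left (s₁ := dl h) (s₂ := dl h'))).trans
            Finset.card_image_le
          exact_mod_cast h3
        have := mul_le_mul_of_nonneg_left this (by positivity : (0:ℝ) ≤ 2 * K ^ 2)
        linarith
      · rw [if_neg hc, zero_add]
        have : ¬ ((A.card : ℝ) ≤ 2 * K ^ 2 * (dl h ∩ dl h').card) := fun h4 =>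
          hc (Finset.mem_filter.2 ⟨hh', h4⟩)
        linarith
    rw [Finset.sum_add_distrib, ← Finset.sum_filter, Finset.sum_const, Finset.sum_const,
      nsmul_eq_mul, nsmul_eq_mul, ← hqdef] at h1
    have h2 : (H.filter (fun h' => h' ∈ H1)) = H1 := by
      rw [Finset.filter_mem_eq_inter, Finset.inter_eq_right.2 (Finset.filter_subset _ _)]
    rw [h2] at h1
    have h3 : (A.card : ℝ) * q ≤ A.card * (2 * K ^ 2 * H1.card) := by nlinarith
    exact le_of_mul_le_mul_left h3 hApos
  let X : Finset (ZMod p) := H1.image (fun h' => h⁻¹ * h')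
  have hXc : X.card = H1.card := dil_card (inv_ne_zero (h0 h hh)) H1
  have hXq : q / K ^ 3 ≤ X.card := by
    rw [hXc, div_le_iff₀ (by positivity)]
    calc q ≤ 2 * K ^ 2 * H1.card := hH1
      _ ≤ K * K ^ 2 * H1.card := by gcongr; linarith
      _ = _ := by ring
  have hM : (1:ℝ) ≤ K ^ 35 := one_le_pow₀ hK1
  have h1R : InR A (K ^ 35) 1 := by
    unfold InR
    simp only [one_mul, Finset.image_id']
    refine hAA.trans ?_
    gcongr
    norm_num
  have hXR : ∀ x ∈ X, InR A (K ^ 35) x := by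
    intro x hx
    obtain ⟨h', hh', rfl⟩ := Finset.mem_image.1 hx
    have hh'H := (Finset.mem_filter.1 hh').1
    have hh'c := (Finset.mem_filter.1 hh').2
    have hhne := h0 h hh
    have hh'ne := h0 h' hh'H
    unfold InR
    have e1 : (A - A.image (fun a => h⁻¹ * h' * a)).card = (dl h - dl h').card := by
      rw [← dil_card hhne (A - _), ← dil_sub, dil_dil, ← mul_assoc, mul_inv_cancel₀ hhne, one_mul]
    rw [e1]
    set B := dl h ∩ dl h' with hB
    have tri := Finset.ruzsa_triangle_inequality_sub_sub_sub (dl h) B (dl h')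
    have t1 : (dl h - B).card ≤ (A - A).card := by
      rw [← dil_card hhne (A - A), ← dil_sub]
      exact Finset.card_le_card (Finset.sub_subset_sub_left Finset.inter_subset_left)
    have t2 : (dl h' - B).card ≤ (A - A).card := by
      rw [← dil_card hh'ne (A - A), ← dil_sub]
      exact Finset.card_le_card (Finset.sub_subset_sub_left Finset.inter_subset_right)
    have t3 : ((dl h - dl h').card : ℝ) * B.card ≤ ((A - A).card : ℝ) * (A - A).card := by
      exact_mod_cast tri.trans (Nat.mul_le_mul t1 t2)
    have t4 : ((dl h - dl h').card : ℝ) * A.card ≤ (2 * K ^ 34 * A.card) * A.card := by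
      calc _ ≤ ((dl h - dl h').card : ℝ) * (2 * K ^ 2 * B.card) := by gcongr
        _ = 2 * K ^ 2 * (((dl h - dl h').card : ℝ) * B.card) := by ring
        _ ≤ 2 * K ^ 2 * (((A - A).card : ℝ) * (A - A).card) := by gcongr
        _ ≤ 2 * K ^ 2 * ((K ^ 16 * A.card) * (K ^ 16 * A.card)) := by gcongr
        _ = _ := by ring
    refine (le_of_mul_le_mul_right t4 hApos).trans ?_
    calc 2 * K ^ 34 * (A.card : ℝ) ≤ K * K ^ 34 * A.card := by gcongr; linarith
      _ = _ := by ring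
  have hXge : (2 : ℝ) ≤ X.card := by
    refine le_trans ?_ hXq
    rw [le_div_iff₀ (by positivity)]
    refine le_trans ?_ hbig.le
    gcongr
    omega
  have hpX : (p : ℝ) ≤ (X.card : ℝ) ^ 2 ^ n := hn.trans (by gcongr)
  have hall := InR.grow hA n (K ^ 35) hM h1R X hXR (by exact_mod_cast hXge) (by exact_mod_cast hpX)
  rw [← pow_mul, ← hE] at hall
  have hpp : (0:ℝ) < p := by exact_mod_cast (Fact.out : p.Prime).pos
  rcases InR.final hA _ (one_le_pow₀ hK1) hall with hf | hf
  · have : q ≤ 2 * K ^ (35 * E + 2) := by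
      calc q ≤ L.card := hq
        _ ≤ K ^ 2 * A.card := hLA
        _ ≤ K ^ 2 * (2 * K ^ (35 * E)) := by gcongr
        _ = _ := by ring
    linarith
  · have h1 : (p : ℝ) * q ≤ p * (2 * K ^ (35 * E + 2)) := by
      calc (p : ℝ) * q ≤ 2 * K ^ (35 * E) * A.card * q := by gcongr
        _ ≤ 2 * K ^ (35 * E) * L.card * q := by
          have : (A.card : ℝ) ≤ L.card := by exact_mod_cast Finset.card_le_card hAL
          gcongr
        _ = 2 * K ^ (35 * E) * (L.card * q) := by ring
        _ ≤ 2 * K ^ (35 * E) * (K * p) := by gcongr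
        _ = 2 * K ^ (35 * E) * (K * p * 1) := by ring
        _ ≤ 2 * K ^ (35 * E) * (K * p * K) := by gcongr
        _ = _ := by ring
    have := le_of_mul_le_mul_left h1 hpp
    linarith

/-- Exponential sum over a finite set. -/
noncomputable def expS {p : ℕ} [NeZero p] (H : Finset (ZMod p)) (a : ZMod p) : ℂ :=
  ∑ h ∈ H, ZMod.stdAddChar (a * h)

/-- Level set of the exponential sum. -/
noncomputable def levS {p : ℕ} [NeZero p] (H : Finset (ZMod p)) (α : ℝ) : Finset (ZMod p) :=
  Finset.univ.filter (fun a => α * H.card ≤ ‖expS H a‖)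

lemma norm_stdAddChar' {p : ℕ} [NeZero p] (x : ZMod p) : ‖(ZMod.stdAddChar x : ℂ)‖ = 1 :=
  AddChar.norm_apply _ _

lemma norm_expS_le {p : ℕ} [NeZero p] (H : Finset (ZMod p)) (a : ZMod p) : ‖expS H a‖ ≤ H.card := by
  refine (norm_sum_le _ _).trans ?_
  simp [norm_stdAddChar']

lemma conj_stdAddChar {p : ℕ} [NeZero p] (x : ZMod p) :
    (starRingEnd ℂ) (ZMod.stdAddChar x : ℂ) = ZMod.stdAddChar (-x) := by
  rw [AddChar.map_neg_eq_conj]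

set_option maxHeartbeats 1000000 in
lemma spec_pairs {p : ℕ} [NeZero p] (H : Finset (ZMod p)) (hH : H.Nonempty) (α : ℝ) (hα : 0 ≤ α) :
    α ^ 2 * ((levS H α).card : ℝ) ^ 2 ≤ 2 *
      (((levS H α) ×ˢ (levS H α)).filter (fun x => x.1 - x.2 ∈ levS H (α ^ 2 / 2))).card := by
  classical
  set L := levS H α with hL
  have hLmem : ∀ a ∈ L, α * H.card ≤ ‖expS H a‖ := fun a ha => (Finset.mem_filter.1 ha).2
  clear_value L
  obtain ⟨q, hq⟩ : ∃ q : ℝ, q = H.card := ⟨_, rfl⟩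
  have hqpos : 0 < q := by rw [hq]; exact_mod_cast hH.card_pos
  have hθ : ∀ a : ZMod p, ∃ θ : ℂ, ‖θ‖ ≤ 1 ∧ θ * expS H a = (‖expS H a‖ : ℂ) := by
    intro a
    by_cases h : expS H a = 0
    · exact ⟨0, by simp, by simp [h]⟩
    · have hn : (‖expS H a‖ : ℂ) ≠ 0 := by simpa using h
      refine ⟨(starRingEnd ℂ) (expS H a) / ‖expS H a‖, ?_, ?_⟩
      · rw [norm_div, RCLike.norm_conj]
        simp only [Complex.norm_real, norm_norm]
        exact div_self_le_one _
      · rw [div_mul_eq_mul_div, div_eq_iff hn, mul_comm, Complex.mul_conj, Complex.normSq_eq_norm_sq]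
        push_cast; ring
  choose θ hθ1 hθ2 using hθ
  let c : ZMod p → ℂ := fun h => ∑ a ∈ L, θ a * ZMod.stdAddChar (a * h)
  have h1 : ((∑ a ∈ L, ‖expS H a‖ : ℝ) : ℂ) = ∑ h ∈ H, c h := by
    push_cast
    simp only [c]
    rw [Finset.sum_comm]
    refine Finset.sum_congr rfl fun a _ => ?_
    rw [← hθ2 a, expS, Finset.mul_sum]
  have h2 : (∑ a ∈ L, ‖expS H a‖) ≤ ∑ h ∈ H, ‖c h‖ := by
    have h3 := norm_sum_le H c
    rw [← h1, Complex.norm_real] at h3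
    exact (le_abs_self _).trans h3
  have h4 : (∑ h ∈ H, ‖c h‖) ^ 2 ≤ q * ∑ h ∈ H, ‖c h‖ ^ 2 := by
    rw [hq]; exact sq_sum_le_card_mul_sum_sq
  have h5 : ((∑ h ∈ H, ‖c h‖ ^ 2 : ℝ) : ℂ) =
      ∑ x ∈ L ×ˢ L, θ x.1 * (starRingEnd ℂ) (θ x.2) * expS H (x.1 - x.2) := by
    push_cast
    have : ∀ h ∈ H, (‖c h‖ : ℂ) ^ 2 = ∑ x ∈ L ×ˢ L,
        θ x.1 * (starRingEnd ℂ) (θ x.2) * ZMod.stdAddChar ((x.1 - x.2) * h) := by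
      intro h _
      have e : (‖c h‖ : ℂ) ^ 2 = c h * (starRingEnd ℂ) (c h) := by
        rw [Complex.mul_conj, Complex.normSq_eq_norm_sq]; push_cast; rfl
      rw [e]
      simp only [c]
      rw [map_sum, Finset.sum_mul_sum, Finset.sum_product]
      refine Finset.sum_congr rfl fun a _ => Finset.sum_congr rfl fun b _ => ?_
      rw [RingHom.map_mul, conj_stdAddChar, sub_mul, sub_eq_add_neg, AddChar.map_add_eq_mul]
      ring
    rw [Finset.sum_congr rfl this, Finset.sum_comm]
    refine Finset.sum_congr rfl fun x _ => ?_
    rw [expS, Finset.mul_sum]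
  have h6 : ∑ h ∈ H, ‖c h‖ ^ 2 ≤ ∑ x ∈ L ×ˢ L, ‖expS H (x.1 - x.2)‖ := by
    have h7 : ‖((∑ h ∈ H, ‖c h‖ ^ 2 : ℝ) : ℂ)‖ ≤ ∑ x ∈ L ×ˢ L, ‖expS H (x.1 - x.2)‖ := by
      rw [h5]
      refine (norm_sum_le _ _).trans (Finset.sum_le_sum fun x _ => ?_)
      rw [norm_mul, norm_mul, RCLike.norm_conj]
      have := mul_le_mul (hθ1 x.1) (hθ1 x.2) (norm_nonneg _) zero_le_one
      nlinarith [norm_nonneg (expS H (x.1 - x.2))]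
    rw [Complex.norm_real] at h7
    exact (le_abs_self _).trans h7
  set G := (L ×ˢ L).filter (fun x => x.1 - x.2 ∈ levS H (α ^ 2 / 2)) with hG
  have h8 : ∑ x ∈ L ×ˢ L, ‖expS H (x.1 - x.2)‖ ≤ q * G.card + α ^ 2 / 2 * q * (L.card : ℝ) ^ 2 := by
    have h9 : ∀ x ∈ L ×ˢ L, ‖expS H (x.1 - x.2)‖ ≤
        (if x.1 - x.2 ∈ levS H (α ^ 2 / 2) then q else 0) + α ^ 2 / 2 * q := by
      intro x _
      by_cases hx : x.1 - x.2 ∈ levS H (α ^ 2 / 2)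
      · rw [if_pos hx]
        have := norm_expS_le H (x.1 - x.2)
        rw [← hq] at this
        have : 0 ≤ α ^ 2 / 2 * q := by positivity
        linarith
      · rw [if_neg hx, zero_add]
        simp only [levS, Finset.mem_filter, Finset.mem_univ, true_and, not_le] at hx
        rw [hq]; exact hx.le
    refine (Finset.sum_le_sum h9).trans ?_
    rw [Finset.sum_add_distrib, ← Finset.sum_filter, Finset.sum_const, Finset.sum_const,
      Finset.card_product, nsmul_eq_mul, nsmul_eq_mul]
    push_cast
    rw [← hG]
    apply le_of_eq; ring
  have h10 : α * q * L.card ≤ ∑ a ∈ L, ‖expS H a‖ := by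
    calc α * q * L.card = ∑ a ∈ L, α * q := by simp [mul_comm]
      _ ≤ _ := Finset.sum_le_sum fun a ha => by rw [hq]; exact hLmem a ha
  have h11 : (α * q * L.card) ^ 2 ≤ q * (q * G.card + α ^ 2 / 2 * q * (L.card : ℝ) ^ 2) := by
    calc _ ≤ (∑ h ∈ H, ‖c h‖) ^ 2 := by
          refine pow_le_pow_left₀ (by positivity) (h10.trans h2) 2
      _ ≤ _ := h4
      _ ≤ _ := by gcongr; exact h6.trans h8
  have h12 : q ^ 2 * (α ^ 2 * (L.card : ℝ) ^ 2) ≤ q ^ 2 * (2 * G.card) := by nlinarith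
  exact le_of_mul_le_mul_left h12 (by positivity)

lemma spec_parseval {p : ℕ} [Fact p.Prime] (H : Finset (ZMod p)) :
    ∑ a, ‖expS H a‖ ^ 2 = p * H.card := by
  classical
  have h : ((∑ a, ‖expS H a‖ ^ 2 : ℝ) : ℂ) = p * H.card := by
    push_cast
    have : ∀ a, (‖expS H a‖ : ℂ) ^ 2 = ∑ h ∈ H, ∑ h' ∈ H, ZMod.stdAddChar (a * (h - h')) := by
      intro a
      have e : (‖expS H a‖ : ℂ) ^ 2 = expS H a * (starRingEnd ℂ) (expS H a) := by
        rw [Complex.mul_conj, Complex.normSq_eq_norm_sq]; push_cast; rfl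
      rw [e, expS, map_sum, Finset.sum_mul_sum]
      refine Finset.sum_congr rfl fun h _ => Finset.sum_congr rfl fun h' _ => ?_
      rw [conj_stdAddChar, mul_sub, sub_eq_add_neg, AddChar.map_add_eq_mul]
    simp_rw [this]
    rw [Finset.sum_comm]
    have h2 : ∀ h ∈ H, ∑ a : ZMod p, ∑ h' ∈ H, (ZMod.stdAddChar (a * (h - h')) : ℂ) = p := by
      intro h hh
      rw [Finset.sum_comm]
      simp_rw [AddChar.sum_mulShift _ (ZMod.isPrimitive_stdAddChar p), sub_eq_zero, ZMod.card]
      push_cast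
      rw [Finset.sum_ite_eq]
      simp [hh]
    rw [Finset.sum_congr rfl h2]
    simp [mul_comm]
  exact_mod_cast h

theorem bgk (ε : ℝ) (hε : 0 < ε) : ∃ δ : ℝ, 0 < δ ∧ ∀ (p : ℕ) [Fact p.Prime] (H : Finset (ZMod p)),
    (∀ h ∈ H, h ≠ 0) → (∀ h ∈ H, H.image (fun x => h * x) = H) → (p : ℝ) ^ ε ≤ H.card →
    ∀ a : ZMod p, a ≠ 0 → ‖expS H a‖ ≤ 2 * H.card * (p : ℝ) ^ (-δ) := by
  obtain ⟨n, hn⟩ : ∃ n : ℕ, 2 / ε < 2 ^ n := pow_unbounded_of_one_lt _ (by norm_num)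
  obtain ⟨E, hE⟩ : ∃ E : ℕ, E = 35 * 693 ^ n + 2 := ⟨_, rfl⟩
  obtain ⟨κ, hκ⟩ : ∃ κ : ℝ, κ = ε / (E + 6) := ⟨_, rfl⟩
  have hκpos : 0 < κ := by rw [hκ]; positivity
  have hκE : κ * (E + 6) = ε := by rw [hκ]; field_simp
  obtain ⟨J, hJ⟩ : ∃ J : ℕ, 1 / κ < J := exists_nat_gt _
  have hJpos : 0 < J := by
    have : (0:ℝ) < J := lt_trans (by positivity) hJ
    exact_mod_cast this
  obtain ⟨δ, hδ⟩ : ∃ δ : ℝ, δ = κ / 3 ^ J := ⟨_, rfl⟩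
  have hδpos : 0 < δ := by rw [hδ]; positivity
  refine ⟨δ, hδpos, ?_⟩
  intro p _ H h0 hmul hHq a ha
  have hp1 : (1:ℝ) < p := by exact_mod_cast (Fact.out : p.Prime).one_lt
  have hp0 : (0:ℝ) < p := by linarith
  obtain ⟨x, hx⟩ : ∃ x : ℝ, x = (p : ℝ) ^ δ := ⟨_, rfl⟩
  have hx0 : 0 < x := by rw [hx]; positivity
  have hxinv : (p : ℝ) ^ (-δ) = x⁻¹ := by rw [hx, Real.rpow_neg hp0.le]
  rw [hxinv]
  obtain ⟨q, hq⟩ : ∃ q : ℝ, q = H.card := ⟨_, rfl⟩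
  have hqpos : 0 < q := by rw [hq]; refine lt_of_lt_of_le ?_ hHq; positivity
  have hHne : H.Nonempty := by
    rw [← Finset.card_pos]; rw [hq] at hqpos; exact_mod_cast hqpos
  by_cases hx2 : x < 2
  · refine (norm_expS_le H a).trans ?_
    rw [← div_eq_mul_inv, le_div_iff₀ hx0]
    rw [← hq]; nlinarith
  push Not at hx2
  by_contra hcon
  push Not at hcon
  have hx1 : 1 ≤ x := by linarith
  let al : ℕ → ℝ := fun j => (x ^ 3 ^ j)⁻¹
  obtain ⟨K, hK⟩ : ∃ K : ℝ, K = x ^ 3 ^ J := ⟨_, rfl⟩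
  have hKp : K = (p : ℝ) ^ κ := by
    rw [hK, hx, ← Real.rpow_natCast, ← Real.rpow_mul hp0.le]
    congr 1
    rw [hδ]; push_cast; field_simp
  have hK4 : 4 ≤ K := by
    rw [hK]
    calc (4:ℝ) ≤ 2 ^ 3 := by norm_num
      _ ≤ x ^ 3 := by gcongr
      _ ≤ x ^ 3 ^ J := by
        apply pow_le_pow_right₀ hx1
        calc 3 = 3 ^ 1 := by norm_num
          _ ≤ 3 ^ J := Nat.pow_le_pow_right (by norm_num) hJpos
  have hK0 : 0 < K := by linarith
  have hal : ∀ j, al (j + 1) ≤ al j ^ 2 / 2 := by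
    intro j
    simp only [al]
    rw [inv_pow, inv_eq_one_div, inv_eq_one_div, div_div]
    apply one_div_le_one_div_of_le (by positivity)
    calc (x ^ 3 ^ j) ^ 2 * 2 ≤ (x ^ 3 ^ j) ^ 2 * x := by gcongr
      _ = x ^ (3 ^ j * 2 + 1) := by rw [pow_succ x (3 ^ j * 2), pow_mul]
      _ ≤ x ^ 3 ^ (j + 1) := by
        apply pow_le_pow_right₀ hx1
        rw [pow_succ 3 j]
        have : 1 ≤ 3 ^ j := Nat.one_le_pow _ _ (by norm_num)
        omega
  have halK : ∀ j ≤ J, 1 ≤ K * al j := by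
    intro j hj
    simp only [al]
    rw [← div_eq_mul_inv, le_div_iff₀ (by positivity), one_mul, hK]
    exact pow_le_pow_right₀ hx1 (Nat.pow_le_pow_right (by norm_num) hj)
  have hal0 : ∀ j, 0 < al j := fun j => by simp only [al]; positivity
  have halle : ∀ j, al j ≤ x⁻¹ := by
    intro j
    simp only [al]
    apply inv_anti₀ hx0
    calc x = x ^ 1 := by simp
      _ ≤ _ := pow_le_pow_right₀ hx1 (Nat.one_le_pow _ _ (by norm_num))
  -- expS is invariant
  have hSinv : ∀ h ∈ H, ∀ b, expS H (h * b) = expS H b := by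
    intro h hh b
    unfold expS
    conv_rhs => rw [← hmul h hh]
    rw [Finset.sum_image (fun y _ z _ hyz => mul_left_cancel₀ (h0 h hh) hyz)]
    refine Finset.sum_congr rfl fun y _ => ?_
    congr 1; ring
  have hLinv : ∀ j, ∀ h ∈ H, ∀ b ∈ levS H (al j), h * b ∈ levS H (al j) := by
    intro j h hh b hb
    simp only [levS, Finset.mem_filter, Finset.mem_univ, true_and] at hb ⊢
    rw [hSinv h hh]; exact hb
  have haL : ∀ j, a ∈ levS H (al j) := by
    intro j
    simp only [levS, Finset.mem_filter, Finset.mem_univ, true_and]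
    refine le_trans ?_ hcon.le
    rw [← hq]
    have := mul_le_mul_of_nonneg_right (halle j) hqpos.le
    have : 0 ≤ q * x⁻¹ := by positivity
    linarith
  have hLq : ∀ j, q ≤ (levS H (al j)).card := by
    intro j
    rw [hq]
    norm_cast
    rw [← dil_card ha H]
    refine Finset.card_le_card ?_
    intro y hy
    obtain ⟨h, hh, rfl⟩ := Finset.mem_image.1 hy
    rw [mul_comm]
    exact hLinv j h hh a (haL j)
  have hpK : (p : ℝ) ≤ K ^ J := by
    rw [hKp, ← Real.rpow_natCast, ← Real.rpow_mul hp0.le]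
    conv_lhs => rw [← Real.rpow_one (p : ℝ)]
    apply Real.rpow_le_rpow_of_exponent_le hp1.le
    rw [div_lt_iff₀ hκpos] at hJ
    linarith
  obtain ⟨j, hjJ, hj⟩ : ∃ j < J, ((levS H (al (j + 1))).card : ℝ) ≤ K * (levS H (al j)).card := by
    by_contra hno
    push Not at hno
    have hgrow : ∀ j ≤ J, 1 ≤ j → K ^ j < (levS H (al j)).card := by
      intro j
      induction j with
      | zero => intro _ h; omega
      | succ j ih =>
        intro hj _
        have h1 := hno j (by omega)
        rcases Nat.eq_zero_or_pos j with rfl | hjp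
        · refine lt_of_le_of_lt ?_ h1
          have : (1:ℝ) ≤ (levS H (al 0)).card := by
            exact_mod_cast Finset.card_pos.2 ⟨a, haL 0⟩
          simp only [zero_add, pow_one]
          nlinarith
        · have h2 := ih (by omega) hjp
          refine lt_trans ?_ h1
          rw [pow_succ']
          exact mul_lt_mul_of_pos_left h2 hK0
    have h1 := hgrow J le_rfl hJpos
    have h2 : ((levS H (al J)).card : ℝ) ≤ p := by
      have := Finset.card_le_univ (levS H (al J))
      rw [ZMod.card] at this
      exact_mod_cast this
    linarith
  have hα2 : 2 ≤ K * al j ^ 2 := by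
    have h1 := hal j
    have h2 := halK (j + 1) (by omega)
    have : K * al (j + 1) ≤ K * (al j ^ 2 / 2) := by gcongr
    linarith
  refine bgk_core K hK4 n H (levS H (al j)) (levS H (al (j + 1))) h0 (hLinv j) ⟨a, haL j⟩ ?_ hj
    (by rw [← hq]; exact hLq j) ?_ ?_ ?_
  · have h1 := spec_pairs H hHne (al j) (hal0 j).le
    set L := levS H (al j) with hL
    have h2 : ((L ×ˢ L).filter (fun x => x.1 - x.2 ∈ levS H (al j ^ 2 / 2))).card ≤
        ((L ×ˢ L).filter (fun x => x.1 - x.2 ∈ levS H (al (j + 1)))).card := by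
      refine Finset.card_le_card ?_
      intro y hy
      simp only [Finset.mem_filter, levS, Finset.mem_univ, true_and] at hy ⊢
      refine ⟨hy.1, le_trans ?_ hy.2⟩
      have := hal j
      gcongr
    have h3 : (((L ×ˢ L).filter (fun x => x.1 - x.2 ∈ levS H (al j ^ 2 / 2))).card : ℝ) ≤
        ((L ×ˢ L).filter (fun x => x.1 - x.2 ∈ levS H (al (j + 1)))).card := by exact_mod_cast h2
    have h4 : 2 * (L.card : ℝ) ^ 2 ≤ K * al j ^ 2 * (L.card : ℝ) ^ 2 := by gcongr
    have h5 := mul_le_mul_of_nonneg_left (h1.trans (mul_le_mul_of_nonneg_left h3 (by norm_num : (0:ℝ) ≤ 2))) hK0.le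
    linarith
  · have h1 : ((levS H (al j)).card : ℝ) * (al j * q) ^ 2 ≤ p * q := by
      calc _ = ∑ b ∈ levS H (al j), (al j * q) ^ 2 := by simp
        _ ≤ ∑ b ∈ levS H (al j), ‖expS H b‖ ^ 2 := by
          refine Finset.sum_le_sum fun b hb => ?_
          have := (Finset.mem_filter.1 hb).2
          rw [← hq] at this
          exact pow_le_pow_left₀ (mul_nonneg (hal0 j).le hqpos.le) this 2
        _ ≤ ∑ b, ‖expS H b‖ ^ 2 :=
          Finset.sum_le_sum_of_subset_of_nonneg (Finset.subset_univ _) (fun _ _ _ => by positivity)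
        _ = p * q := by rw [spec_parseval, hq]
    rw [← hq]
    have h2 : q * (((levS H (al j)).card : ℝ) * q * (al j ^ 2)) ≤ q * p := by nlinarith
    have h3 := le_of_mul_le_mul_left h2 hqpos
    set l : ℝ := ((levS H (al j)).card : ℝ) with hl
    have hl0 : 0 ≤ l := by positivity
    calc l * q ≤ l * q * (K * al j ^ 2) := by
          have : 0 ≤ l * q := by positivity
          nlinarith
      _ = K * (l * q * al j ^ 2) := by ring
      _ ≤ K * p := by gcongr
  · rw [← hq]
    have h1 : (p : ℝ) ^ (ε / 2) ≤ q / K ^ 3 := by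
      rw [le_div_iff₀ (by positivity), hKp, ← Real.rpow_natCast, ← Real.rpow_mul hp0.le,
        ← Real.rpow_add hp0]
      refine le_trans ?_ (hq ▸ hHq)
      apply Real.rpow_le_rpow_of_exponent_le hp1.le
      push_cast
      have : (0:ℝ) ≤ κ * E := by positivity
      linarith
    refine le_trans ?_ (pow_le_pow_left₀ (by positivity) h1 _)
    rw [← Real.rpow_natCast, ← Real.rpow_mul hp0.le]
    conv_lhs => rw [← Real.rpow_one (p : ℝ)]
    apply Real.rpow_le_rpow_of_exponent_le hp1.le
    push_cast
    rw [div_lt_iff₀ hε] at hn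
    linarith
  · rw [← hE, ← hq]
    refine lt_of_lt_of_le ?_ (hq ▸ hHq)
    calc 2 * K ^ E ≤ K * K ^ E := by gcongr; linarith
      _ = K ^ (E + 1) := by ring
      _ = (p : ℝ) ^ (κ * (E + 1)) := by
        rw [hKp, ← Real.rpow_natCast, ← Real.rpow_mul hp0.le]; push_cast; rfl
      _ < (p : ℝ) ^ ε := by
        apply Real.rpow_lt_rpow_of_exponent_lt hp1
        rw [← hκE]
        gcongr
        norm_num

structure TriSys (m d p : ℕ) (Φ : (Fin (m+1) → ZMod p) → (Fin (m+1) → ZMod p))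
    (G H : Fin (m+1) → (Fin (m+1) → ZMod p) → ZMod p) : Prop where
  h1 : ∀ v i, Φ v i = v i * G i v + H i v
  hG : ∀ i v v', (∀ j, i < j → v j = v' j) → G i v = G i v'
  hH : ∀ i v v', (∀ j, i < j → v j = v' j) → H i v = H i v'
  hlast : ∀ v, G (Fin.last m) v ≠ 0
  hpoly : ∀ i : Fin m, ∃ σ, 1 ≤ σ ∧ σ ≤ d ∧ ∀ v, (∀ l, i.succ < l → v l ≠ 0) →
    ∃ Q : Polynomial (ZMod p), Q.natDegree = σ ∧
      ∀ t, Q.eval t = G i.castSucc (Function.update v i.succ t)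

namespace TriSys
variable {m d p : ℕ} {Φ : (Fin (m+1) → ZMod p) → (Fin (m+1) → ZMod p)}
  {G H : Fin (m+1) → (Fin (m+1) → ZMod p) → ZMod p}

/-- The multiplier of the `k`-th iterate. -/
def mulA (Φ : (Fin (m+1) → ZMod p) → (Fin (m+1) → ZMod p))
  (G : Fin (m+1) → (Fin (m+1) → ZMod p) → ZMod p) (k : ℕ) (i : Fin (m+1))
  (v : Fin (m+1) → ZMod p) : ZMod p := ∏ l ∈ Finset.range k, G i (Φ^[l] v)

lemma agree (T : TriSys m d p Φ G H) (i : Fin (m+1)) (v v' : Fin (m+1) → ZMod p)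
    (h : ∀ j, i < j → v j = v' j) (k : ℕ) : ∀ j, i < j → Φ^[k] v j = Φ^[k] v' j := by
  induction k with
  | zero => exact h
  | succ k ih =>
    intro j hj
    rw [Function.iterate_succ_apply', Function.iterate_succ_apply', T.h1, T.h1, ih j hj,
      T.hG j _ _ (fun l hl => ih l (hj.trans hl)), T.hH j _ _ (fun l hl => ih l (hj.trans hl))]

lemma agree_mul (T : TriSys m d p Φ G H) (i : Fin (m+1)) (v v' : Fin (m+1) → ZMod p)
    (h : ∀ j, i < j → v j = v' j) (k : ℕ) : mulA Φ G k i v = mulA Φ G k i v' :=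
  Finset.prod_congr rfl fun l _ => T.hG i _ _ (T.agree i v v' h l)

lemma upd_gt (i : Fin (m+1)) (v : Fin (m+1) → ZMod p) (s : ZMod p) :
    ∀ j, i < j → Function.update v i s j = v j := fun j hj =>
  Function.update_of_ne hj.ne' _ _

lemma shift_eq (T : TriSys m d p Φ G H) (i : Fin (m+1)) (v : Fin (m+1) → ZMod p) (s : ZMod p)
    (k : ℕ) : Φ^[k] (Function.update v i s) i = Φ^[k] v i + mulA Φ G k i v * (s - v i) := by
  induction k with
  | zero => simp [mulA]
  | succ k ih =>
    have h := T.agree i _ _ (upd_gt i v s) k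
    rw [Function.iterate_succ_apply', Function.iterate_succ_apply', T.h1, T.h1, ih,
      T.hG i _ _ h, T.hH i _ _ h]
    simp only [mulA, Finset.prod_range_succ]
    ring

lemma line_count [Fact p.Prime] (E : Finset (Fin (m+1) → ZMod p)) (j : Fin (m+1)) (D : ℕ)
    (h : ∀ v, (Finset.univ.filter (fun s => Function.update v j s ∈ E)).card ≤ D) :
    E.card ≤ D * p ^ m := by
  classical
  have := Finset.card_le_mul_card_image_of_maps_to (s := E)
    (t := (Finset.univ : Finset (Fin m → ZMod p))) (f := fun v => j.removeNth v)
    (fun _ _ => Finset.mem_univ _) D ?_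
  · simpa [ZMod.card] using this
  intro b _
  refine le_trans ?_ (h (j.insertNth (0 : ZMod p) b))
  refine Finset.card_le_card_of_injOn (fun v => v j) ?_ ?_
  · intro v hv
    simp only [Finset.coe_filter, Set.mem_setOf_eq, Finset.mem_univ, true_and] at hv ⊢
    rw [Fin.update_insertNth, ← hv.2, Fin.insertNth_self_removeNth]
    exact hv.1
  · intro v hv w hw hvw
    simp only [Finset.coe_filter, Set.mem_setOf_eq] at hv hw
    rw [← Fin.insertNth_self_removeNth j v, ← Fin.insertNth_self_removeNth j w, hv.2, hw.2]
    simp only at hvw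
    rw [hvw]

lemma claimA [Fact p.Prime] (T : TriSys m d p Φ G H) (i : Fin (m+1)) (l : ℕ) :
    (Finset.univ.filter (fun v => mulA Φ G l i v ≠ 0 ∧ Φ^[l] v i = 0)).card ≤ p ^ m := by
  have := line_count (Finset.univ.filter (fun v => mulA Φ G l i v ≠ 0 ∧ Φ^[l] v i = 0)) i 1 ?_
  · simpa using this
  intro v
  rw [Finset.card_le_one]
  intro a ha b hb
  simp only [Finset.mem_filter, Finset.mem_univ, true_and] at ha hb
  rw [T.shift_eq, T.agree_mul i _ _ (upd_gt i v _)] at ha hb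
  have : mulA Φ G l i v * (a - b) = 0 := by linear_combination ha.2 - hb.2
  rcases mul_eq_zero.1 this with h | h
  · exact absurd h ha.1
  · exact sub_eq_zero.1 h

lemma line_poly [Fact p.Prime] (T : TriSys m d p Φ G H) (i : Fin m) :
    ∃ σ, 1 ≤ σ ∧ σ ≤ d ∧ ∀ v l, mulA Φ G l i.succ v ≠ 0 →
      (∀ j, i.succ < j → Φ^[l] v j ≠ 0) →
      ∃ R : Polynomial (ZMod p), R.natDegree = σ ∧
        ∀ s, R.eval s = G i.castSucc (Φ^[l] (Function.update v i.succ s)) := by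
  obtain ⟨σ, h1, h2, h3⟩ := T.hpoly i
  refine ⟨σ, h1, h2, fun v l hA hz => ?_⟩
  obtain ⟨Q, hQ, hQe⟩ := h3 (Φ^[l] v) hz
  set a := mulA Φ G l i.succ v
  refine ⟨Q.comp (Polynomial.C a * Polynomial.X +
    Polynomial.C (Φ^[l] v i.succ - a * v i.succ)), ?_, fun s => ?_⟩
  · rw [Polynomial.natDegree_comp, Polynomial.natDegree_linear hA, hQ, mul_one]
  · rw [Polynomial.eval_comp]
    simp only [Polynomial.eval_add, Polynomial.eval_mul, Polynomial.eval_C, Polynomial.eval_X]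
    rw [hQe]
    apply T.hG
    intro j hj
    rcases (show i.succ ≤ j from hj).eq_or_lt with rfl | hj'
    · rw [Function.update_self, T.shift_eq]; ring
    · rw [Function.update_of_ne hj'.ne', T.agree i.succ _ _ (upd_gt i.succ v s) l j hj']

lemma card_zeros [Fact p.Prime] (R : Polynomial (ZMod p)) (hR : R ≠ 0)
    (S : Finset (ZMod p)) (hS : ∀ s ∈ S, R.eval s = 0) : S.card ≤ R.natDegree :=
  (Finset.card_le_card (t := R.roots.toFinset) fun s hs => by
    simp [hR, hS s hs]).trans
    ((Multiset.toFinset_card_le _).trans (Polynomial.card_roots' _))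

lemma claimB [Fact p.Prime] (T : TriSys m d p Φ G H) (i : Fin m) (l : ℕ) :
    (Finset.univ.filter (fun v => mulA Φ G l i.succ v ≠ 0 ∧ (∀ j, i.succ < j → Φ^[l] v j ≠ 0) ∧
      G i.castSucc (Φ^[l] v) = 0)).card ≤ d * p ^ m := by
  obtain ⟨σ, h1, h2, h3⟩ := T.line_poly i
  refine line_count _ i.succ d fun v => ?_
  by_cases hv : mulA Φ G l i.succ v ≠ 0 ∧ (∀ j, i.succ < j → Φ^[l] v j ≠ 0)
  · obtain ⟨R, hR, hRe⟩ := h3 v l hv.1 hv.2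
    have hR0 : R ≠ 0 := by rintro rfl; simp at hR; omega
    refine (card_zeros R hR0 _ fun s hs => ?_).trans (hR.trans_le h2)
    simp only [Finset.mem_filter, Finset.mem_univ, true_and] at hs
    rw [hRe]; exact hs.2.2
  · rw [Finset.filter_eq_empty_iff.2]
    · simp
    intro s _ hs
    simp only [Finset.mem_filter, Finset.mem_univ, true_and] at hs
    refine hv ⟨?_, fun j hj => ?_⟩
    · rw [← T.agree_mul i.succ _ _ (upd_gt i.succ v s)]; exact hs.1
    · rw [← T.agree i.succ _ _ (upd_gt i.succ v s) l j hj]; exact hs.2.1 j hj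

lemma sum_prod_natDegree [Fact p.Prime] (R : ℕ → Polynomial (ZMod p)) (σ : ℕ) (hσ : 1 ≤ σ)
    (c : ℕ → ZMod p) (K : ℕ) (hR : ∀ l < K, (R l).natDegree = σ) (hc : ∃ k < K, c k ≠ 0) :
    (∑ k ∈ Finset.range K, Polynomial.C (c k) * ∏ l ∈ Finset.range k, R l) ≠ 0 ∧
    (∑ k ∈ Finset.range K, Polynomial.C (c k) * ∏ l ∈ Finset.range k, R l).natDegree ≤ K * σ := by
  have hR0 : ∀ l < K, R l ≠ 0 := fun l hl h => by
    have := hR l hl; rw [h] at this; simp at this; omega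
  have hdeg : ∀ k < K, (∏ l ∈ Finset.range k, R l).natDegree = k * σ := by
    intro k hk
    rw [Polynomial.natDegree_prod _ _ fun l hl => hR0 l ((Finset.mem_range.1 hl).trans hk),
      Finset.sum_congr rfl fun l hl => hR l ((Finset.mem_range.1 hl).trans hk)]
    simp
  constructor
  · classical
    set M := (Finset.range K).filter (fun k => c k ≠ 0) with hM
    have hMne : M.Nonempty := by
      obtain ⟨k, hk, hck⟩ := hc
      exact ⟨k, by simp [hM, hk, hck]⟩
    set k0 := M.max' hMne with hk0
    have hk0M : k0 ∈ M := M.max'_mem hMne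
    have hk0' : k0 < K ∧ c k0 ≠ 0 := by simpa [hM] using hk0M
    intro h0
    have hco : (∑ k ∈ Finset.range K, Polynomial.C (c k) *
        ∏ l ∈ Finset.range k, R l).coeff (k0 * σ) ≠ 0 := by
      rw [Polynomial.finset_sum_coeff, Finset.sum_eq_single k0]
      · rw [Polynomial.coeff_C_mul, ← hdeg k0 hk0'.1, Polynomial.coeff_natDegree]
        refine mul_ne_zero hk0'.2 ?_
        rw [Polynomial.leadingCoeff_ne_zero, Finset.prod_ne_zero_iff]
        exact fun l hl => hR0 l ((Finset.mem_range.1 hl).trans hk0'.1)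
      · intro k hk hne
        rw [Polynomial.coeff_C_mul]
        rcases lt_or_gt_of_ne hne with hlt | hgt
        · rw [Polynomial.coeff_eq_zero_of_natDegree_lt, mul_zero]
          rw [hdeg k (Finset.mem_range.1 hk)]
          exact Nat.mul_lt_mul_of_pos_right hlt hσ
        · have : c k = 0 := by
            by_contra hck
            have := M.le_max' k (by simp [hM, hck, Finset.mem_range.1 hk])
            omega
          rw [this, zero_mul]
      · intro h; exact absurd (Finset.mem_range.2 hk0'.1) h
    exact hco (by rw [h0]; simp)
  · refine Polynomial.natDegree_sum_le_of_forall_le _ _ fun k hk => ?_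
    refine (Polynomial.natDegree_C_mul_le _ _).trans ?_
    rw [hdeg k (Finset.mem_range.1 hk)]
    exact Nat.mul_le_mul_right _ (Finset.mem_range.1 hk).le

lemma claimC [Fact p.Prime] (T : TriSys m d p Φ G H) (i : Fin m) (K : ℕ) (c : ℕ → ZMod p)
    (hc : ∃ k < K, c k ≠ 0) :
    (Finset.univ.filter (fun v => (∀ l < K, mulA Φ G l i.succ v ≠ 0 ∧
      (∀ j, i.succ < j → Φ^[l] v j ≠ 0)) ∧
      ∑ k ∈ Finset.range K, c k * mulA Φ G k i.castSucc v = 0)).card ≤ (K * d) * p ^ m := by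
  obtain ⟨σ, h1, h2, h3⟩ := T.line_poly i
  refine line_count _ i.succ (K * d) fun v => ?_
  by_cases hv : ∀ l < K, mulA Φ G l i.succ v ≠ 0 ∧ (∀ j, i.succ < j → Φ^[l] v j ≠ 0)
  · have : ∀ l, ∃ R : Polynomial (ZMod p), l < K → R.natDegree = σ ∧
        ∀ s, R.eval s = G i.castSucc (Φ^[l] (Function.update v i.succ s)) := by
      intro l
      by_cases hl : l < K
      · obtain ⟨R, hR⟩ := h3 v l (hv l hl).1 (hv l hl).2
        exact ⟨R, fun _ => hR⟩
      · exact ⟨0, fun h => absurd h hl⟩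
    choose R hR using this
    obtain ⟨hne, hdeg⟩ := sum_prod_natDegree R σ h1 c K (fun l hl => (hR l hl).1) hc
    refine (card_zeros _ hne _ fun s hs => ?_).trans (hdeg.trans (Nat.mul_le_mul_left _ h2))
    simp only [Finset.mem_filter, Finset.mem_univ, true_and] at hs
    rw [Polynomial.eval_finset_sum, ← hs.2]
    refine Finset.sum_congr rfl fun k hk => ?_
    rw [Polynomial.eval_mul, Polynomial.eval_C, Polynomial.eval_prod, mulA]
    congr 1
    exact Finset.prod_congr rfl fun l hl =>
      (hR l ((Finset.mem_range.1 hl).trans (Finset.mem_range.1 hk))).2 s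
  · rw [Finset.filter_eq_empty_iff.2]
    · simp
    intro s _ hs
    simp only [Finset.mem_filter, Finset.mem_univ, true_and] at hs
    refine hv fun l hl => ⟨?_, fun j hj => ?_⟩
    · rw [← T.agree_mul i.succ _ _ (upd_gt i.succ v s)]; exact (hs.1 l hl).1
    · rw [← T.agree i.succ _ _ (upd_gt i.succ v s) l j hj]; exact (hs.1 l hl).2 j hj

lemma zero_count [Fact p.Prime] (T : TriSys m d p Φ G H) (i : Fin m) (K : ℕ) (c : ℕ → ZMod p)
    (hc : ∃ k < K, c k ≠ 0) :
    (Finset.univ.filter (fun v =>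
      ∑ k ∈ Finset.range K, c k * mulA Φ G k i.castSucc v = 0)).card ≤
      ((m + 1) * (d + 1) + d) * K * p ^ m := by
  classical
  set EA := fun x : Fin (m+1) × ℕ => Finset.univ.filter
    (fun v => mulA Φ G x.2 x.1 v ≠ 0 ∧ Φ^[x.2] v x.1 = 0)
  set EB := fun x : Fin m × ℕ => Finset.univ.filter
    (fun v => mulA Φ G x.2 x.1.succ v ≠ 0 ∧ (∀ j, x.1.succ < j → Φ^[x.2] v j ≠ 0) ∧
      G x.1.castSucc (Φ^[x.2] v) = 0)
  set EC := Finset.univ.filter (fun v => (∀ l < K, mulA Φ G l i.succ v ≠ 0 ∧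
      (∀ j, i.succ < j → Φ^[l] v j ≠ 0)) ∧
      ∑ k ∈ Finset.range K, c k * mulA Φ G k i.castSucc v = 0)
  have hsub : (Finset.univ.filter (fun v =>
      ∑ k ∈ Finset.range K, c k * mulA Φ G k i.castSucc v = 0)) ⊆
      ((Finset.univ ×ˢ Finset.range K).biUnion EA ∪ (Finset.univ ×ˢ Finset.range K).biUnion EB)
        ∪ EC := by
    intro v hv
    simp only [Finset.mem_filter, Finset.mem_univ, true_and] at hv
    by_contra hcon
    simp only [Finset.mem_union, Finset.mem_biUnion, Finset.mem_product, Finset.mem_univ,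
      Finset.mem_range, true_and, not_or, not_exists, not_and, Prod.forall] at hcon
    obtain ⟨⟨hA, hB⟩, hC⟩ := hcon
    have key : ∀ j : Fin (m+1), ∀ j', j ≤ j' → ∀ l < K, G j' (Φ^[l] v) ≠ 0 ∧ Φ^[l] v j' ≠ 0 := by
      have step : ∀ j : Fin (m+1), (∀ l < K, G j (Φ^[l] v) ≠ 0) →
          ∀ l < K, G j (Φ^[l] v) ≠ 0 ∧ Φ^[l] v j ≠ 0 := by
        intro j hj l hl
        refine ⟨hj l hl, fun h0 => hA j l hl ?_⟩
        simp only [EA, Finset.mem_filter, Finset.mem_univ, true_and]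
        exact ⟨Finset.prod_ne_zero_iff.2 fun l' hl' =>
          hj l' ((Finset.mem_range.1 hl').trans hl), h0⟩
      intro j
      induction j using Fin.reverseInduction with
      | last =>
        intro j' hj'
        rw [Fin.last_le_iff.1 hj']
        exact step _ fun l _ => T.hlast _
      | cast j ih =>
        intro j' hj'
        rcases hj'.eq_or_lt with rfl | hlt
        · refine step _ fun l hl h0 => hB j l hl ?_
          simp only [EB, Finset.mem_filter, Finset.mem_univ, true_and]
          exact ⟨Finset.prod_ne_zero_iff.2 fun l' hl' =>
            (ih _ le_rfl l' ((Finset.mem_range.1 hl').trans hl)).1,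
            fun j' hj' => (ih j' hj'.le l hl).2, h0⟩
        · exact ih j' hlt
    refine hC ?_
    simp only [EC, Finset.mem_filter, Finset.mem_univ, true_and]
    exact ⟨fun l hl => ⟨Finset.prod_ne_zero_iff.2 fun l' hl' =>
      (key _ _ le_rfl l' ((Finset.mem_range.1 hl').trans hl)).1,
      fun j' hj' => (key _ _ hj'.le l hl).2⟩, hv⟩
  have cA : ((Finset.univ ×ˢ Finset.range K).biUnion EA).card ≤ ((m+1) * K) * p ^ m := by
    refine (Finset.card_biUnion_le_card_mul _ _ (p ^ m) fun x _ => T.claimA x.1 x.2).trans ?_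
    simp
  have cB : ((Finset.univ ×ˢ Finset.range K).biUnion EB).card ≤ (m * K) * (d * p ^ m) := by
    refine (Finset.card_biUnion_le_card_mul _ _ (d * p ^ m) fun x _ => T.claimB x.1 x.2).trans ?_
    simp
  have cC : EC.card ≤ (K * d) * p ^ m := T.claimC i K c hc
  calc _ ≤ _ := Finset.card_le_card hsub
    _ ≤ _ := (Finset.card_union_le _ _).trans (add_le_add_left (Finset.card_union_le _ _) _)
    _ ≤ ((m+1) * K) * p ^ m + (m * K) * (d * p ^ m) + (K * d) * p ^ m :=
      add_le_add (add_le_add cA cB) cC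
    _ ≤ _ := by
      have : 0 ≤ d * K * p ^ m := Nat.zero_le _
      nlinarith

/-- The linear form along the orbit. -/
def lf (Φ : (Fin (m+1) → ZMod p) → (Fin (m+1) → ZMod p)) (b : Fin (m+1) → ZMod p) (k : ℕ)
  (v : Fin (m+1) → ZMod p) : ZMod p := ∑ i, b i * Φ^[k] v i

lemma lf_shift (T : TriSys m d p Φ G H) (b : Fin (m+1) → ZMod p) (i : Fin (m+1))
    (hb : ∀ j < i, b j = 0) (k : ℕ) (v : Fin (m+1) → ZMod p) (s : ZMod p) :
    lf Φ b k (Function.update v i s) = lf Φ b k v + b i * mulA Φ G k i v * (s - v i) := by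
  classical
  unfold lf
  rw [← Finset.add_sum_erase _ _ (Finset.mem_univ i), ← Finset.add_sum_erase _ _ (Finset.mem_univ i),
    T.shift_eq]
  have : ∀ j ∈ Finset.univ.erase i, b j * Φ^[k] (Function.update v i s) j = b j * Φ^[k] v j := by
    intro j hj
    rcases lt_or_gt_of_ne (Finset.ne_of_mem_erase hj) with h | h
    · rw [hb j h]; simp
    · rw [T.agree i _ _ (upd_gt i v s) k j h]
  rw [Finset.sum_congr rfl this]
  ring

lemma exp_bound [Fact p.Prime] (T : TriSys m d p Φ G H) (b : Fin (m+1) → ZMod p) (i : Fin m)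
    (hb : ∀ j < i.castSucc, b j = 0) (hbi : b i.castSucc ≠ 0) (K : ℕ) (c : ℕ → ZMod p)
    (hc : ∃ k < K, c k ≠ 0) :
    ‖∑ v, ZMod.stdAddChar (∑ k ∈ Finset.range K, c k * lf Φ b k v)‖ ≤
      (((m + 1) * (d + 1) + d) * K * p ^ m : ℕ) := by
  classical
  have hp : (p : ℝ) ≠ 0 := by exact_mod_cast (Fact.out : p.Prime).ne_zero
  set i' := i.castSucc
  set f : (Fin (m+1) → ZMod p) → ZMod p := fun v => ∑ k ∈ Finset.range K, c k * lf Φ b k v with hf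
  set P : (Fin (m+1) → ZMod p) → ZMod p :=
    fun v => ∑ k ∈ Finset.range K, c k * mulA Φ G k i' v with hP
  have hsh : ∀ v s, f (Function.update v i' (v i' + s)) = f v + b i' * P v * s := by
    intro v s
    simp only [hf, hP]
    rw [Finset.mul_sum, Finset.sum_mul, ← Finset.sum_add_distrib]
    refine Finset.sum_congr rfl fun k _ => ?_
    rw [T.lf_shift b i' hb]; ring
  have htr : ∀ s, ∑ v, (ZMod.stdAddChar (f v) : ℂ) =
      ∑ v, ZMod.stdAddChar (f (Function.update v i' (v i' + s))) := by
    intro s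
    refine (Fintype.sum_bijective (fun v : Fin (m+1) → ZMod p =>
      Function.update v i' (v i' + s)) ?_ _ _ fun v => rfl).symm
    refine Function.bijective_iff_has_inverse.2 ⟨fun v => Function.update v i' (v i' - s), ?_, ?_⟩
    · intro v; simp
    · intro v; simp
  have hZ := T.zero_count i K c hc
  have h1 : (p : ℂ) * ∑ v, (ZMod.stdAddChar (f v) : ℂ) =
      ∑ v, ZMod.stdAddChar (f v) * ∑ s, ZMod.stdAddChar ((b i' * P v) * s) := by
    have : (p : ℂ) * ∑ v, (ZMod.stdAddChar (f v) : ℂ) =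
        ∑ s : ZMod p, ∑ v, (ZMod.stdAddChar (f (Function.update v i' (v i' + s))) : ℂ) := by
      rw [Finset.sum_congr rfl fun s _ => (htr s).symm]
      simp [ZMod.card]
    rw [this, Finset.sum_comm]
    refine Finset.sum_congr rfl fun v _ => ?_
    rw [Finset.mul_sum]
    refine Finset.sum_congr rfl fun s _ => ?_
    rw [hsh, AddChar.map_add_eq_mul]
  have h2 : ∀ v, ∑ s, (ZMod.stdAddChar ((b i' * P v) * s) : ℂ) = if P v = 0 then (p : ℂ) else 0 := by
    intro v
    have := AddChar.sum_mulShift (b i' * P v) (ZMod.isPrimitive_stdAddChar p)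
    simp only [ZMod.card] at this
    rw [show (∑ s, (ZMod.stdAddChar ((b i' * P v) * s) : ℂ)) =
      ∑ s, (ZMod.stdAddChar (s * (b i' * P v)) : ℂ) from
      Finset.sum_congr rfl fun s _ => by rw [mul_comm], this]
    simp [hbi]
  have h3 : (p : ℝ) * ‖∑ v, (ZMod.stdAddChar (f v) : ℂ)‖ ≤
      p * ((Finset.univ.filter (fun v => P v = 0)).card : ℝ) := by
    have e : (p : ℝ) * ‖∑ v, (ZMod.stdAddChar (f v) : ℂ)‖ =
      ‖(p : ℂ) * ∑ v, (ZMod.stdAddChar (f v) : ℂ)‖ := by rw [norm_mul]; simp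
    rw [e, h1]
    refine (norm_sum_le _ _).trans ?_
    rw [mul_comm, ← nsmul_eq_mul, ← Finset.sum_const, Finset.sum_filter]
    refine Finset.sum_le_sum fun v _ => ?_
    rw [h2, norm_mul, AddChar.norm_apply, one_mul]
    split_ifs <;> simp
  have hp' : (0 : ℝ) < p := by exact_mod_cast (Fact.out : p.Prime).pos
  exact (le_of_mul_le_mul_left h3 hp').trans (by exact_mod_cast hZ)

end TriSys

namespace TriSys
variable {m d p : ℕ} {Φ : (Fin (m+1) → ZMod p) → (Fin (m+1) → ZMod p)}
  {G H : Fin (m+1) → (Fin (m+1) → ZMod p) → ZMod p}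

lemma diag_count (ν K : ℕ) :
    (((Fintype.piFinset fun _ : Fin ν => Finset.range K) ×ˢ
      (Fintype.piFinset fun _ : Fin ν => Finset.range K)).filter
      (fun x => ∀ r, ∃ r', x.1 r = x.2 r')).card ≤ ν ^ ν * K ^ ν := by
  classical
  have : (((Fintype.piFinset fun _ : Fin ν => Finset.range K) ×ˢ
      (Fintype.piFinset fun _ : Fin ν => Finset.range K)).filter
      (fun x => ∀ r, ∃ r', x.1 r = x.2 r')) ⊆
      ((Finset.univ : Finset (Fin ν → Fin ν)) ×ˢ
        (Fintype.piFinset fun _ : Fin ν => Finset.range K)).image (fun y => (y.2 ∘ y.1, y.2)) := by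
    intro x hx
    rw [Finset.mem_filter, Finset.mem_product] at hx
    choose π hπ using hx.2
    refine Finset.mem_image.2 ⟨(π, x.2), ?_, ?_⟩
    · simp only [Finset.mem_product, Finset.mem_univ, true_and]; exact hx.1.2
    · refine Prod.ext ?_ rfl
      funext r; exact (hπ r).symm
  refine (Finset.card_le_card this).trans (Finset.card_image_le.trans ?_)
  simp [Finset.card_product, Fintype.card_piFinset]

/-- Difference of multiplicities. -/
def cdif (p : ℕ) {ν : ℕ} (x : (Fin ν → ℕ) × (Fin ν → ℕ)) (k : ℕ) : ZMod p :=
  ((Finset.univ.filter (fun r => x.1 r = k)).card : ZMod p) -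
    ((Finset.univ.filter (fun r => x.2 r = k)).card : ZMod p)

lemma cdif_sum {ν K : ℕ} (κ : Fin ν → ℕ) (hκ : ∀ r, κ r < K) (f : ℕ → ZMod p) :
    ∑ k ∈ Finset.range K, ((Finset.univ.filter (fun r => κ r = k)).card : ZMod p) * f k =
      ∑ r, f (κ r) := by
  rw [← Finset.sum_fiberwise_of_maps_to (s := Finset.univ) (t := Finset.range K) (g := κ)
    (fun r _ => Finset.mem_range.2 (hκ r))]
  refine Finset.sum_congr rfl fun k _ => ?_
  rw [Finset.sum_congr rfl (g := fun _ => f k) (fun r hr => by rw [(Finset.mem_filter.1 hr).2])]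
  simp

lemma cdif_ne {ν K : ℕ} (hp : ν < p) (x : (Fin ν → ℕ) × (Fin ν → ℕ))
    (hx : ∀ r, x.1 r < K) (hd : ¬ ∀ r, ∃ r', x.1 r = x.2 r') : ∃ k < K, cdif p x k ≠ 0 := by
  push Not at hd
  obtain ⟨r, hr⟩ := hd
  refine ⟨x.1 r, hx r, ?_⟩
  unfold cdif
  have h0 : Finset.univ.filter (fun r' => x.2 r' = x.1 r) = ∅ := by
    rw [Finset.filter_eq_empty_iff]
    intro r' _ h; exact hr r' h.symm
  rw [h0]
  simp only [Finset.card_empty, Nat.cast_zero, sub_zero]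
  rw [Ne, ZMod.natCast_eq_zero_iff]
  intro hdvd
  have hpos : 0 < (Finset.univ.filter (fun r' => x.1 r' = x.1 r)).card :=
    Finset.card_pos.2 ⟨r, by simp⟩
  have hle := Nat.le_of_dvd hpos hdvd
  have : (Finset.univ.filter (fun r' => x.1 r' = x.1 r)).card ≤ ν :=
    (Finset.card_le_univ _).trans (by simp)
  omega

lemma conj_sac [NeZero p] (x : ZMod p) :
    (starRingEnd ℂ) (ZMod.stdAddChar x) = ZMod.stdAddChar (-x) := by
  exact (AddChar.map_neg_eq_conj _ _).symm

lemma sac_sum [NeZero p] {ι : Type*} (s : Finset ι) (f : ι → ZMod p) :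
    (ZMod.stdAddChar (∑ r ∈ s, f r) : ℂ) = ∏ r ∈ s, ZMod.stdAddChar (f r) := by
  classical
  induction s using Finset.induction_on with
  | empty => simp
  | insert a s ha ih => rw [Finset.sum_insert ha, Finset.prod_insert ha, AddChar.map_add_eq_mul, ih]

lemma norm_pow_expand [NeZero p] (ν K : ℕ) (f : ℕ → ZMod p) :
    ((‖∑ k ∈ Finset.range K, (ZMod.stdAddChar (f k) : ℂ)‖ ^ (2 * ν) : ℝ) : ℂ) =
      ∑ x ∈ ((Fintype.piFinset fun _ : Fin ν => Finset.range K) ×ˢ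
      (Fintype.piFinset fun _ : Fin ν => Finset.range K)),
      ZMod.stdAddChar (∑ k ∈ Finset.range K, cdif p x k * f k) := by
  classical
  set S := ∑ k ∈ Finset.range K, (ZMod.stdAddChar (f k) : ℂ) with hS
  have e : ((‖S‖ ^ (2 * ν) : ℝ) : ℂ) = S ^ ν * ((starRingEnd ℂ) S) ^ ν := by
    rw [← mul_pow, Complex.mul_conj, Complex.normSq_eq_norm_sq, pow_mul]; push_cast; rfl
  have h1 : S ^ ν = ∑ κ ∈ Fintype.piFinset fun _ : Fin ν => Finset.range K,
      ZMod.stdAddChar (∑ r, f (κ r)) := by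
    have := Finset.prod_univ_sum (fun _ : Fin ν => Finset.range K)
      (fun _ k => (ZMod.stdAddChar (f k) : ℂ))
    rw [Finset.prod_const, Finset.card_univ, Fintype.card_fin] at this
    rw [hS, this]
    exact Finset.sum_congr rfl fun κ _ => (sac_sum _ _).symm
  rw [e, ← map_pow, h1, map_sum, Finset.sum_mul_sum, Finset.sum_product]
  refine Finset.sum_congr rfl fun κ hκ => Finset.sum_congr rfl fun l hl => ?_
  rw [conj_sac, ← AddChar.map_add_eq_mul]
  congr 1
  simp only [cdif, sub_mul, Finset.sum_sub_distrib]
  rw [cdif_sum κ (fun r => Finset.mem_range.1 (Fintype.mem_piFinset.1 hκ r)),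
    cdif_sum l (fun r => Finset.mem_range.1 (Fintype.mem_piFinset.1 hl r))]
  ring

lemma moment [Fact p.Prime] (T : TriSys m d p Φ G H) (b : Fin (m+1) → ZMod p) (i : Fin m)
    (hb : ∀ j < i.castSucc, b j = 0) (hbi : b i.castSucc ≠ 0) (K ν : ℕ) (hν : ν < p) :
    ∑ v, ‖∑ k ∈ Finset.range K, (ZMod.stdAddChar (lf Φ b k v) : ℂ)‖ ^ (2 * ν) ≤
      (ν : ℝ) ^ ν * K ^ ν * p ^ (m+1) +
        (K : ℝ) ^ (2 * ν) * (((m + 1) * (d + 1) + d) * K * p ^ m) := by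
  classical
  set Ω := ((Fintype.piFinset fun _ : Fin ν => Finset.range K) ×ˢ
      (Fintype.piFinset fun _ : Fin ν => Finset.range K)) with hΩ
  have hΩc : (Ω.card : ℝ) = (K : ℝ) ^ (2 * ν) := by
    simp [hΩ, Finset.card_product, Fintype.card_piFinset]; ring
  set S := ∑ v, ‖∑ k ∈ Finset.range K, (ZMod.stdAddChar (lf Φ b k v) : ℂ)‖ ^ (2 * ν) with hS
  have hS0 : 0 ≤ S := Finset.sum_nonneg fun _ _ => by positivity
  have h1 : (S : ℂ) = ∑ x ∈ Ω, ∑ v,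
      ZMod.stdAddChar (∑ k ∈ Finset.range K, cdif p x k * lf Φ b k v) := by
    rw [Finset.sum_comm, hS, Complex.ofReal_sum]
    exact Finset.sum_congr rfl fun v _ => norm_pow_expand ν K (fun k => lf Φ b k v)
  have h2 : S = ‖(S : ℂ)‖ := by rw [Complex.norm_real, Real.norm_of_nonneg hS0]
  rw [h2, h1]
  refine (norm_sum_le _ _).trans ?_
  rw [← Finset.sum_filter_add_sum_filter_not Ω (fun x => ∀ r, ∃ r', x.1 r = x.2 r')]
  refine add_le_add ?_ ?_
  · refine (Finset.sum_le_card_nsmul _ _ ((p : ℝ) ^ (m+1)) fun x _ => ?_).trans ?_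
    · refine (norm_sum_le _ _).trans ?_
      simp [ZMod.card]
    · rw [nsmul_eq_mul]
      refine mul_le_mul_of_nonneg_right ?_ (by positivity)
      exact_mod_cast diag_count ν K
  · refine (Finset.sum_le_card_nsmul _ _ ((((m + 1) * (d + 1) + d) * K * p ^ m : ℝ))
      fun x hx => ?_).trans ?_
    · rw [Finset.mem_filter, hΩ, Finset.mem_product] at hx
      have := T.exp_bound b i hb hbi K (cdif p x) (cdif_ne hν x
        (fun r => Finset.mem_range.1 (Fintype.mem_piFinset.1 hx.1.1 r)) hx.2)
      push_cast at this
      exact this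
    · rw [nsmul_eq_mul]
      refine mul_le_mul_of_nonneg_right ?_ (by positivity)
      rw [← hΩc]
      exact_mod_cast Finset.card_filter_le _ _

lemma shift_avg (a : ℕ → ℂ) (ha : ∀ n, ‖a n‖ ≤ 1) (N K : ℕ) :
    (K : ℝ) * ‖∑ n ∈ Finset.range N, a n‖ ≤
      ∑ n ∈ Finset.range N, ‖∑ k ∈ Finset.range K, a (n + k)‖ + 2 * K ^ 2 := by
  have h1 : ∀ k, ‖∑ n ∈ Finset.range N, a n - ∑ n ∈ Finset.range N, a (n + k)‖ ≤ 2 * k := by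
    intro k
    induction k with
    | zero => simp
    | succ k ih =>
      have e : ∑ n ∈ Finset.range N, a n - ∑ n ∈ Finset.range N, a (n + (k + 1)) =
          (∑ n ∈ Finset.range N, a n - ∑ n ∈ Finset.range N, a (n + k)) +
          (a k - a (N + k)) := by
        have := Finset.sum_range_succ (fun n => a (n + k)) N
        rw [Finset.sum_range_succ'] at this
        have e2 : ∀ n, a (n + (k+1)) = a (n + 1 + k) := fun n => by congr 1; ring
        simp only [e2]
        simp only [zero_add] at this
        linear_combination -this
      rw [e]
      refine (norm_add_le _ _).trans ?_
      have := (norm_sub_le (a k) (a (N + k))).trans (add_le_add (ha _) (ha _))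
      push_cast; linarith
  have h2 : (K : ℂ) * ∑ n ∈ Finset.range N, a n =
      ∑ n ∈ Finset.range N, ∑ k ∈ Finset.range K, a (n + k) +
      ∑ k ∈ Finset.range K, (∑ n ∈ Finset.range N, a n - ∑ n ∈ Finset.range N, a (n + k)) := by
    rw [Finset.sum_sub_distrib, Finset.sum_comm]; simp
  have h3 : (K : ℝ) * ‖∑ n ∈ Finset.range N, a n‖ = ‖(K : ℂ) * ∑ n ∈ Finset.range N, a n‖ := by
    rw [norm_mul]; simp
  rw [h3, h2]
  refine (norm_add_le _ _).trans (add_le_add (norm_sum_le _ _) ?_)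
  refine (norm_sum_le _ _).trans ?_
  refine (Finset.sum_le_card_nsmul _ _ (2 * K : ℝ) fun k hk => (h1 k).trans ?_).trans ?_
  · have : (k : ℝ) ≤ K := by exact_mod_cast (Finset.mem_range.1 hk).le
    linarith
  · simp; nlinarith

lemma W_bound [Fact p.Prime] (T : TriSys m d p Φ G H) (b : Fin (m+1) → ZMod p) (i : Fin m)
    (hb : ∀ j < i.castSucc, b j = 0) (hbi : b i.castSucc ≠ 0) (K ν N : ℕ) (hν : ν < p)
    (hν1 : 1 ≤ ν) (hN : 0 < N)
    (w : ℕ → Fin (m+1) → ZMod p) (hw : ∀ n, w (n+1) = Φ (w n))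
    (hinj : Set.InjOn w (Finset.range N)) :
    (∑ n ∈ Finset.range N, ‖∑ k ∈ Finset.range K,
      (ZMod.stdAddChar (∑ j, b j * w (n + k) j) : ℂ)‖) ^ (2 * ν) ≤
      (N : ℝ) ^ (2 * ν - 1) * ((ν : ℝ) ^ ν * K ^ ν * p ^ (m+1) +
        (K : ℝ) ^ (2 * ν) * (((m + 1) * (d + 1) + d) * K * p ^ m)) := by
  classical
  have hit : ∀ k n, w (n + k) = Φ^[k] (w n) := by
    intro k n
    induction k with
    | zero => rfl
    | succ k ih => rw [Function.iterate_succ_apply', ← ih, ← hw]; rfl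
  obtain ⟨q, hq⟩ : ∃ q, 2 * ν = q + 1 := ⟨2 * ν - 1, by omega⟩
  have hN' : (0 : ℝ) < N := by exact_mod_cast hN
  rw [show 2 * ν - 1 = q by omega]
  have hM := T.moment b i hb hbi K ν hν
  rw [hq] at hM ⊢
  have h1 := pow_sum_div_card_le_sum_pow (s := Finset.range N)
    (f := fun n => ‖∑ k ∈ Finset.range K,
      (ZMod.stdAddChar (∑ j, b j * w (n + k) j) : ℂ)‖) (fun _ _ => norm_nonneg _) q
  rw [Finset.card_range, div_le_iff₀' (by positivity)] at h1
  refine h1.trans (mul_le_mul_of_nonneg_left (le_trans ?_ hM) (by positivity))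
  have e : ∑ n ∈ Finset.range N, ‖∑ k ∈ Finset.range K,
      (ZMod.stdAddChar (∑ j, b j * w (n + k) j) : ℂ)‖ ^ (q+1) =
      ∑ v ∈ (Finset.range N).image w, ‖∑ k ∈ Finset.range K,
        (ZMod.stdAddChar (lf Φ b k v) : ℂ)‖ ^ (q+1) := by
    rw [Finset.sum_image hinj]
    refine Finset.sum_congr rfl fun n _ => ?_
    simp only [lf, hit]
  rw [e]
  exact Finset.sum_le_sum_of_subset_of_nonneg (Finset.subset_univ _) fun _ _ _ => by positivity

theorem caseA (m d : ℕ) (ε : ℝ) (hε : 0 < ε) : ∃ δ c : ℝ, 0 < δ ∧ 0 < c ∧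
    ∀ (p : ℕ) [Fact p.Prime] (Φ : (Fin (m+1) → ZMod p) → (Fin (m+1) → ZMod p))
      (G H : Fin (m+1) → (Fin (m+1) → ZMod p) → ZMod p), TriSys m d p Φ G H →
      ∀ (b : Fin (m+1) → ZMod p) (i : Fin m), (∀ j < i.castSucc, b j = 0) → b i.castSucc ≠ 0 →
      ∀ (N : ℕ), 0 < N → (p : ℝ) ^ ((m : ℝ) + ε) ≤ N →
      ∀ (w : ℕ → Fin (m+1) → ZMod p), (∀ n, w (n+1) = Φ (w n)) →
      Set.InjOn w (Finset.range N) →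
      ‖∑ n ∈ Finset.range N, (ZMod.stdAddChar (∑ j, b j * w n j) : ℂ)‖ ≤
        c * N * (p : ℝ) ^ (-δ) := by
  obtain ⟨ν, hν⟩ : ∃ ν : ℕ, 2 / ε + 1 ≤ ν := exists_nat_ge _
  have hν1r : (1 : ℝ) ≤ ν := by have : 0 < 2 / ε := by positivity
                                linarith
  have hν1 : 1 ≤ ν := by exact_mod_cast hν1r
  have hνε : 2 ≤ ν * ε := by
    have : 2 / ε ≤ ν := by linarith
    rwa [div_le_iff₀ hε] at this
  obtain ⟨δ, hδ⟩ : ∃ δ : ℝ, δ = ε / (4 * ν) := ⟨_, rfl⟩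
  obtain ⟨C1, hC1⟩ : ∃ C1 : ℝ, C1 = ((m : ℝ) + 1) * (d + 1) + d := ⟨_, rfl⟩
  obtain ⟨M, hM⟩ : ∃ M : ℝ, M = 2 * ((ν : ℝ) ^ ν + C1) := ⟨_, rfl⟩
  have hC10 : 0 ≤ C1 := by rw [hC1]; positivity
  have hνν : (1 : ℝ) ≤ (ν : ℝ) ^ ν := one_le_pow₀ hν1r
  have hM1 : 1 ≤ M := by rw [hM]; linarith
  have hδ0 : 0 < δ := by rw [hδ]; positivity
  refine ⟨δ, M + 4 + (ν : ℝ) ^ δ, hδ0, by positivity, ?_⟩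
  intro p _ Φ G H T b i hb hbi N hN hpN w hw hinj
  have hp2 : 2 ≤ p := (Fact.out : p.Prime).two_le
  have hp1 : (1 : ℝ) ≤ p := by exact_mod_cast (by omega : 1 ≤ p)
  have hp0 : (0 : ℝ) < p := by linarith
  have hNr : (0 : ℝ) < N := by exact_mod_cast hN
  have hpδ : 0 < (p : ℝ) ^ (-δ) := by positivity
  have hna : ∀ n, ‖(ZMod.stdAddChar (∑ j, b j * w n j) : ℂ)‖ ≤ 1 := fun n => by simp
  rcases le_or_gt p ν with hpν | hpν
  · have h1 : ‖∑ n ∈ Finset.range N, (ZMod.stdAddChar (∑ j, b j * w n j) : ℂ)‖ ≤ N := by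
      refine (norm_sum_le _ _).trans ?_
      simp
    have h2 : 1 ≤ (ν : ℝ) ^ δ * (p : ℝ) ^ (-δ) := by
      rw [Real.rpow_neg hp0.le, ← div_eq_mul_inv, one_le_div (by positivity)]
      exact Real.rpow_le_rpow hp0.le (by exact_mod_cast hpν) hδ0.le
    have h3 : 0 ≤ (M + 4) * N * (p : ℝ) ^ (-δ) := by positivity
    nlinarith
  -- main case
  obtain ⟨x, hx⟩ : ∃ x : ℝ, x = (p : ℝ) ^ (ε / 2) := ⟨_, rfl⟩
  have hx1 : 1 ≤ x := by rw [hx]; exact Real.one_le_rpow hp1 (by positivity)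
  obtain ⟨K, hK⟩ : ∃ K : ℕ, K = ⌈x⌉₊ := ⟨_, rfl⟩
  have hxK : x ≤ K := by rw [hK]; exact Nat.le_ceil x
  have hKx : (K : ℝ) ≤ 2 * x := by
    have := Nat.ceil_lt_add_one (by linarith : 0 ≤ x)
    rw [← hK] at this; linarith
  have hK0 : (0 : ℝ) < K := by linarith
  have hxx : (p : ℝ) ^ m * x * x ≤ N := by
    rw [Real.rpow_add hp0, Real.rpow_natCast] at hpN
    have : x * x = (p : ℝ) ^ ε := by rw [hx, ← Real.rpow_add hp0]; congr 1; ring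
    rw [mul_assoc, this]; exact hpN
  have hpx : (p : ℝ) ≤ x ^ ν := by
    rw [hx, ← Real.rpow_natCast, ← Real.rpow_mul hp0.le]
    calc (p : ℝ) = (p : ℝ) ^ (1 : ℝ) := (Real.rpow_one _).symm
      _ ≤ _ := Real.rpow_le_rpow_of_exponent_le hp1 (by linarith)
  have hpK : (p : ℝ) ≤ (K : ℝ) ^ ν := hpx.trans (pow_le_pow_left₀ (by linarith) hxK _)
  obtain ⟨y, hy⟩ : ∃ y : ℝ, y = (p : ℝ) ^ (-δ) := ⟨_, rfl⟩
  have hyν : y ^ (2 * ν) * x = 1 := by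
    have hνne : (ν : ℝ) ≠ 0 := by positivity
    rw [hy, hx, ← Real.rpow_natCast, ← Real.rpow_mul hp0.le, ← Real.rpow_add hp0]
    rw [hδ]
    have : -(ε / (4 * (ν : ℝ))) * ((2 * ν : ℕ) : ℝ) + ε / 2 = 0 := by
      push_cast; field_simp; ring
    rw [this, Real.rpow_zero]
  have hy0 : 0 < y := by rw [hy]; exact hpδ
  have hy1 : y ≤ 1 := by rw [hy]; exact Real.rpow_le_one_of_one_le_of_nonpos hp1 (by linarith)
  have hyx : 1 ≤ x * y := by
    rw [hx, hy, ← Real.rpow_add hp0]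
    refine Real.one_le_rpow hp1 ?_
    have : ε / (4 * ν) ≤ ε / 2 := by
      apply div_le_div_of_nonneg_left hε.le (by norm_num) (by linarith)
    rw [hδ]; linarith
  rw [← hy]
  obtain ⟨W, hW⟩ : ∃ W : ℝ, W = ∑ n ∈ Finset.range N, ‖∑ k ∈ Finset.range K,
      (ZMod.stdAddChar (∑ j, b j * w (n + k) j) : ℂ)‖ := ⟨_, rfl⟩
  have hWb := T.W_bound b i hb hbi K ν N hpν hν1 hN w hw hinj
  have hsh := shift_avg (fun n => (ZMod.stdAddChar (∑ j, b j * w n j) : ℂ)) hna N K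
  rw [← hW] at hWb hsh
  rw [← hC1] at hWb
  obtain ⟨t, ht⟩ : ∃ t : ℝ,
    t = ‖∑ n ∈ Finset.range N, (ZMod.stdAddChar (∑ j, b j * w n j) : ℂ)‖ := ⟨_, rfl⟩
  rw [← ht] at hsh ⊢
  have hWle : W ≤ N * K * M * y := by
    refine le_of_pow_le_pow_left₀ (n := 2 * ν) (by omega) (by positivity) (hWb.trans ?_)
    have a1 : (ν : ℝ) ^ ν * K ^ ν * p ^ (m+1) ≤ (K : ℝ) ^ (2 * ν) * ((ν : ℝ) ^ ν * K * p ^ m) := by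
      have hK1 : (1 : ℝ) ≤ K := hx1.trans hxK
      calc (ν : ℝ) ^ ν * K ^ ν * p ^ (m+1) = ((ν : ℝ) ^ ν * K ^ ν * p ^ m) * (p * 1) := by ring
        _ ≤ ((ν : ℝ) ^ ν * K ^ ν * p ^ m) * ((K : ℝ) ^ ν * K) := by gcongr
        _ = _ := by ring
    have a2 : (ν : ℝ) ^ ν * K ^ ν * p ^ (m+1) + (K : ℝ) ^ (2 * ν) * (C1 * K * p ^ m) ≤
        (K : ℝ) ^ (2 * ν) * (M * (p ^ m * x)) := by
      have a3 : (ν : ℝ) ^ ν * K * p ^ m + C1 * K * p ^ m ≤ M * (p ^ m * x) := by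
        calc (ν : ℝ) ^ ν * K * p ^ m + C1 * K * p ^ m = ((ν : ℝ) ^ ν + C1) * p ^ m * K := by ring
          _ ≤ ((ν : ℝ) ^ ν + C1) * p ^ m * (2 * x) := by gcongr
          _ = _ := by rw [hM]; ring
      calc _ ≤ (K : ℝ) ^ (2 * ν) * ((ν : ℝ) ^ ν * K * p ^ m) +
          (K : ℝ) ^ (2 * ν) * (C1 * K * p ^ m) := add_le_add_left a1 _
        _ = (K : ℝ) ^ (2 * ν) * ((ν : ℝ) ^ ν * K * p ^ m + C1 * K * p ^ m) := by ring
        _ ≤ _ := by gcongr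
    have a4 : (p : ℝ) ^ m * x ≤ N * y ^ (2 * ν) := by
      calc (p : ℝ) ^ m * x = (p ^ m * x * x) * y ^ (2 * ν) := by
            linear_combination (-(p : ℝ) ^ m * x) * hyν
        _ ≤ _ := by gcongr
    obtain ⟨q, hq⟩ : ∃ q, 2 * ν = q + 1 := ⟨2 * ν - 1, by omega⟩
    have hMp : M ≤ M ^ (2 * ν) := le_self_pow₀ hM1 (by omega)
    calc _ ≤ (N : ℝ) ^ (2 * ν - 1) * ((K : ℝ) ^ (2 * ν) * (M * (p ^ m * x))) := by gcongr
      _ ≤ (N : ℝ) ^ (2 * ν - 1) * ((K : ℝ) ^ (2 * ν) * (M ^ (2 * ν) * (N * y ^ (2 * ν)))) := by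
        gcongr
      _ = _ := by
        rw [mul_pow, mul_pow, mul_pow]
        have : (N : ℝ) ^ (2 * ν) = N ^ (2 * ν - 1) * N := by
          rw [← pow_succ]; congr 1; omega
        rw [this]; ring
  have hKle : 2 * (K : ℝ) ≤ 4 * N * y := by
    have : x ≤ N * y := by
      have h1 : (1 : ℝ) ≤ (p : ℝ) ^ m := one_le_pow₀ hp1
      have h2 : x * x ≤ N := by
        refine le_trans ?_ hxx
        rw [mul_assoc]; exact le_mul_of_one_le_left (by positivity) h1
      calc x ≤ x * (x * y) := le_mul_of_one_le_right (by linarith) hyx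
        _ = (x * x) * y := by ring
        _ ≤ _ := by gcongr
    linarith
  have hfin : (K : ℝ) * t ≤ K * ((M + 4) * N * y) := by
    calc (K : ℝ) * t ≤ W + 2 * K ^ 2 := hsh
      _ ≤ N * K * M * y + K * (4 * N * y) := by nlinarith
      _ = _ := by ring
  have := le_of_mul_le_mul_left hfin hK0
  have h5 : 0 ≤ (ν : ℝ) ^ δ * N * y := by positivity
  linarith
end TriSys

lemma eval_agree {m p : ℕ} (i : Fin (m+1)) (P : MvPolynomial (Fin (m+1)) (ZMod p))
    (hP : ∀ d ∈ P.support, ∀ j : Fin (m+1), j ≤ i → d j = 0) (v v' : Fin (m+1) → ZMod p)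
    (h : ∀ j, i < j → v j = v' j) : MvPolynomial.eval v P = MvPolynomial.eval v' P := by
  rw [MvPolynomial.eval_eq', MvPolynomial.eval_eq']
  refine Finset.sum_congr rfl fun d hd => ?_
  congr 1
  refine Finset.prod_congr rfl fun j _ => ?_
  rcases le_or_gt j i with hj | hj
  · rw [hP d hd j hj, pow_zero, pow_zero]
  · rw [h j hj]

lemma aeval_update {m p : ℕ} (k : Fin (m+1)) (v : Fin (m+1) → ZMod p) (t : ZMod p)
    (P : MvPolynomial (Fin (m+1)) (ZMod p)) :
    Polynomial.eval t (MvPolynomial.aeval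
      (Function.update (fun j => Polynomial.C (v j)) k Polynomial.X) P) =
      MvPolynomial.eval (Function.update v k t) P := by
  induction P using MvPolynomial.induction_on with
  | C a => simp
  | add P Q hP hQ => simp [hP, hQ]
  | mul_X P j hP =>
    simp only [map_mul, Polynomial.eval_mul, hP, aeval_X, eval_X]
    congr 1
    by_cases hj : j = k
    · subst hj; simp
    · simp [Function.update_of_ne hj]

lemma poly_part {m p : ℕ} [Fact p.Prime] (s : ℕ → ℕ → ℕ) (i : Fin m)
    (Gp Gt : MvPolynomial (Fin (m+1)) (ZMod p)) (g : ZMod p) (hg : g ≠ 0)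
    (hG : Gp = MvPolynomial.C g *
          (∏ j ∈ Finset.univ.filter (fun j : Fin (m + 1) => i.castSucc < j),
            MvPolynomial.X j ^ s i.castSucc.val j.val) + Gt)
    (hGt : ∀ d ∈ Gt.support, ∀ j : Fin (m + 1), i.castSucc < j → d j < s i.castSucc.val j.val)
    (hσ : 1 ≤ s i (i+1)) (v : Fin (m+1) → ZMod p) (hv : ∀ l, i.succ < l → v l ≠ 0) :
    ∃ Q : Polynomial (ZMod p), Q.natDegree = s i (i+1) ∧
      ∀ t, Q.eval t = MvPolynomial.eval (Function.update v i.succ t) Gp := by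
  classical
  set w : Fin (m+1) → Polynomial (ZMod p) :=
    Function.update (fun j => Polynomial.C (v j)) i.succ Polynomial.X with hw
  have hw1 : w i.succ = Polynomial.X := by simp [hw]
  have hw2 : ∀ j, j ≠ i.succ → w j = Polynomial.C (v j) := fun j hj => by
    simp [hw, Function.update_of_ne hj]
  refine ⟨MvPolynomial.aeval w Gp, ?_, fun t => aeval_update _ _ _ _⟩
  have hmain : (MvPolynomial.aeval w (MvPolynomial.C g *
          (∏ j ∈ Finset.univ.filter (fun j : Fin (m + 1) => i.castSucc < j),
            MvPolynomial.X j ^ s i.castSucc.val j.val))).natDegree = s i (i+1) := by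
    rw [map_mul, map_prod]
    simp only [map_pow, aeval_X]
    rw [show (MvPolynomial.aeval w) (MvPolynomial.C g) = Polynomial.C g by
      simp [MvPolynomial.aeval_C]]
    rw [Polynomial.natDegree_C_mul hg, Polynomial.natDegree_prod]
    · rw [Finset.sum_eq_single i.succ]
      · rw [hw1]; simp
      · intro j _ hj; rw [hw2 j hj]; simp
      · intro h; exact absurd (by simp) h
    · intro j hj
      refine pow_ne_zero _ ?_
      by_cases hj' : j = i.succ
      · rw [hj', hw1]; exact Polynomial.X_ne_zero
      · rw [hw2 j hj']
        simp only [Finset.mem_filter, Finset.mem_univ, true_and] at hj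
        rw [Ne, Polynomial.C_eq_zero]
        refine hv j (lt_of_le_of_ne ?_ (Ne.symm hj'))
        exact hj
  have hrest : (MvPolynomial.aeval w Gt).natDegree < s i (i+1) := by
    rw [MvPolynomial.aeval_def, MvPolynomial.eval₂_eq']
    refine lt_of_le_of_lt (Polynomial.natDegree_sum_le_of_forall_le (n := s i (i+1) - 1) _ _ ?_)
      (by omega)
    intro D hD
    have h1 : D i.succ < s i (i+1) := by
      have := hGt D hD i.succ (Fin.castSucc_lt_succ)
      simpa using this
    have h2 : (∏ j, w j ^ D j).natDegree ≤ D i.succ := by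
      refine (Polynomial.natDegree_prod_le _ _).trans ?_
      rw [Finset.sum_eq_single i.succ]
      · rw [hw1]; simp
      · intro j _ hj; rw [hw2 j hj, ← Polynomial.C_pow]; simp
      · intro h; exact absurd (by simp) h
    refine Polynomial.natDegree_mul_le.trans ?_
    have h3 : ((algebraMap (ZMod p) (Polynomial (ZMod p))) (coeff D Gt)).natDegree = 0 :=
      Polynomial.natDegree_C _
    rw [h3]; omega
  rw [hG, map_add, Polynomial.natDegree_add_eq_left_of_natDegree_lt (by rw [hmain]; exact hrest), hmain]

lemma deg_part {m p : ℕ} [Fact p.Prime] (s : ℕ → ℕ → ℕ) (i : Fin m)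
    (Fp Gp Hp Gt : MvPolynomial (Fin (m+1)) (ZMod p)) (g : ZMod p) (hg : g ≠ 0)
    (hF : Fp = MvPolynomial.X i.castSucc * Gp + Hp)
    (hH : ∀ d ∈ Hp.support, ∀ j : Fin (m + 1), j ≤ i.castSucc → d j = 0)
    (hG : Gp = MvPolynomial.C g *
          (∏ j ∈ Finset.univ.filter (fun j : Fin (m + 1) => i.castSucc < j),
            MvPolynomial.X j ^ s i.castSucc.val j.val) + Gt)
    (hGt : ∀ d ∈ Gt.support, ∀ j : Fin (m + 1), i.castSucc < j → d j < s i.castSucc.val j.val) :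
    s i (i+1) ≤ Fp.totalDegree := by
  classical
  set D' : Fin (m+1) →₀ ℕ := ∑ j ∈ Finset.univ.filter (fun j : Fin (m + 1) => i.castSucc < j),
    Finsupp.single j (s i.castSucc.val j.val) with hD'
  have hD's : D' i.succ = s i (i+1) := by
    rw [hD', Finsupp.finset_sum_apply, Finset.sum_eq_single i.succ]
    · simp
    · intro j _ hj; simp [hj]
    · intro h; exact absurd (by simp) h
  have hprod : (∏ j ∈ Finset.univ.filter (fun j : Fin (m + 1) => i.castSucc < j),
            MvPolynomial.X j ^ s i.castSucc.val j.val : MvPolynomial (Fin (m+1)) (ZMod p)) =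
            MvPolynomial.monomial D' 1 := by
    rw [hD', MvPolynomial.monomial_sum_one]
    exact Finset.prod_congr rfl fun j _ => MvPolynomial.X_pow_eq_monomial
  have hc1 : MvPolynomial.coeff D' Gt = 0 := by
    by_contra h
    have := hGt D' (MvPolynomial.mem_support_iff.2 h) i.succ Fin.castSucc_lt_succ
    rw [hD's] at this
    simp at this
  have hc2 : MvPolynomial.coeff (Finsupp.single i.castSucc 1 + D') Hp = 0 := by
    by_contra h
    have := hH _ (MvPolynomial.mem_support_iff.2 h) i.castSucc le_rfl
    simp at this
  have hc : MvPolynomial.coeff (Finsupp.single i.castSucc 1 + D') Fp = g := by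
    rw [hF, MvPolynomial.coeff_add, hc2, MvPolynomial.coeff_X_mul, hG, MvPolynomial.coeff_add, hc1,
      hprod, MvPolynomial.coeff_C_mul, MvPolynomial.coeff_monomial]
    simp
  have h1 := MvPolynomial.le_totalDegree (p := Fp) (s := Finsupp.single i.castSucc 1 + D')
    (MvPolynomial.mem_support_iff.2 (by rw [hc]; exact hg))
  refine le_trans ?_ h1
  have h2 := Finsupp.le_degree i.succ (Finsupp.single i.castSucc 1 + D')
  rw [Finsupp.add_apply, hD's] at h2
  refine le_trans (Nat.le_add_left _ _) (h2.trans (le_of_eq ?_))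
  rfl

lemma triSys_of {m d p : ℕ} [Fact p.Prime] (s : ℕ → ℕ → ℕ)
    (F : Fin (m + 1) → MvPolynomial (Fin (m + 1)) (ZMod p)) (hF : IsFSystem m s F)
    (hd : (Finset.univ.sup fun i => (F i).totalDegree) = d)
    (hs : (∏ i ∈ Finset.range m, s i (i + 1)) ≠ 0) :
    ∃ G H, TriSys m d p (fun v i => MvPolynomial.eval v (F i)) G H := by
  have key : ∀ i : Fin (m+1), ∃ Gp Hp : MvPolynomial (Fin (m + 1)) (ZMod p),
      F i = MvPolynomial.X i * Gp + Hp ∧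
      (∀ d ∈ Gp.support, ∀ j : Fin (m + 1), j ≤ i → d j = 0) ∧
      (∀ d ∈ Hp.support, ∀ j : Fin (m + 1), j ≤ i → d j = 0) ∧
      (i = Fin.last m → ∀ v, MvPolynomial.eval v Gp ≠ 0) ∧
      (∀ i' : Fin m, i = i'.castSucc → ∃ σ, 1 ≤ σ ∧ σ ≤ d ∧ ∀ v, (∀ l, i'.succ < l → v l ≠ 0) →
        ∃ Q : Polynomial (ZMod p), Q.natDegree = σ ∧
        ∀ t, Q.eval t = MvPolynomial.eval (Function.update v i'.succ t) Gp) := by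
    intro i
    have hCs : ∀ g : ZMod p, ∀ d ∈ (MvPolynomial.C g : MvPolynomial (Fin (m+1)) (ZMod p)).support,
        ∀ j : Fin (m+1), j ≤ i → d j = 0 := by
      intro g d hd j _
      have : d = 0 := by
        by_contra hne
        rw [MvPolynomial.mem_support_iff, MvPolynomial.coeff_C, if_neg (Ne.symm hne)] at hd
        exact hd rfl
      rw [this]; rfl
    by_cases hi : i = Fin.last m
    · obtain ⟨g, h, hg, hFl⟩ := hF.1
      refine ⟨MvPolynomial.C g, MvPolynomial.C h, ?_, hCs g, hCs h, fun _ v => by simpa using hg, ?_⟩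
      · rw [hi, hFl, mul_comm]
      · intro i' hi'
        rw [hi] at hi'
        exact absurd hi'.symm (Fin.castSucc_lt_last i').ne
    · obtain ⟨i', rfl⟩ : ∃ i' : Fin m, i'.castSucc = i := Fin.exists_castSucc_eq.2 hi
      obtain ⟨Gp, Hp, Gt, g, hg, h1, h2, h3, h4, h5, h6⟩ := hF.2 i'.castSucc i'.2
      refine ⟨Gp, Hp, h1, h2, h3, fun h => absurd h hi, ?_⟩
      intro i'' hi''
      obtain rfl := Fin.castSucc_injective m hi''
      have hσ : 1 ≤ s i' (i' + 1) :=
        Nat.one_le_iff_ne_zero.2 (Finset.prod_ne_zero_iff.1 hs i' (Finset.mem_range.2 i'.2))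
      refine ⟨s i' (i'+1), hσ, ?_, fun v hv => poly_part s i' Gp Gt g hg h4 h5 hσ v hv⟩
      refine (deg_part s i' (F i'.castSucc) Gp Hp Gt g hg h1 h3 h4 h5).trans ?_
      rw [← hd]
      exact Finset.le_sup (f := fun i => (F i).totalDegree) (Finset.mem_univ _)
  choose Gp Hp k1 k2 k3 k4 k5 using key
  refine ⟨fun i v => MvPolynomial.eval v (Gp i), fun i v => MvPolynomial.eval v (Hp i), ?_⟩
  refine ⟨fun v i => ?_, fun i v v' h => eval_agree i _ (k2 i) v v' h,
    fun i v v' h => eval_agree i _ (k3 i) v v' h, fun v => k4 _ rfl v, fun i => k5 _ i rfl⟩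
  show MvPolynomial.eval v (F i) = _
  rw [k1 i]; simp

lemma eP_eq {p : ℕ} [NeZero p] (x : ZMod p) : eP p x = ZMod.stdAddChar x := by
  have := ZMod.stdAddChar_coe (N := p) (x.val : ℤ)
  rw [Int.cast_natCast, ZMod.natCast_zmod_val] at this
  rw [this, eP]; push_cast; rfl

lemma inj_of_period {α : Type*} (f : α → α) (u : ℕ → α) (hu : ∀ n, u (n+1) = f (u n)) (τ : ℕ)
    (hτ : 0 < τ) (hper : ∀ n, u (n + τ) = u n)
    (hmin : ∀ t, 0 < t → (∀ n, u (n + t) = u n) → τ ≤ t) :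
    Set.InjOn u (Finset.range τ) := by
  have hk : ∀ k a b, u a = u b → u (a + k) = u (b + k) := by
    intro k a b h
    induction k with
    | zero => exact h
    | succ k ih => rw [← add_assoc, ← add_assoc, hu, hu, ih]
  have main : ∀ a b, a < b → b < τ → u a ≠ u b := by
    intro a b hab hb h
    have h2 : ∀ n, u (n + (b - a)) = u n := by
      intro n
      have h3 := hk (n + τ - a) a b h
      have e1 : a + (n + τ - a) = n + τ := by omega
      have e2 : b + (n + τ - a) = n + (b - a) + τ := by omega
      rw [e1, e2, hper, hper] at h3
      exact h3.symm
    have := hmin (b - a) (by omega) h2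
    omega
  intro a ha b hb h
  simp only [Finset.coe_range, Set.mem_Iio] at ha hb
  rcases lt_trichotomy a b with hab | hab | hab
  · exact absurd h (main a b hab hb)
  · exact hab
  · exact absurd h.symm (main b a hab ha)

/-- Block decomposition of a sum of a periodic sequence. -/
lemma block_bound (a : ℕ → ℂ) (ha : ∀ n, ‖a n‖ ≤ 1) (t : ℕ) (ht : 0 < t)
    (hper : ∀ n, a (n + t) = a n) (N : ℕ) :
    ‖∑ n ∈ Finset.range N, a n‖ ≤ (N / t : ℕ) * ‖∑ n ∈ Finset.range t, a n‖ + t := by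
  have hperk : ∀ k n, a (t * k + n) = a n := by
    intro k n
    induction k with
    | zero => simp
    | succ k ih => rw [show t * (k+1) + n = (t * k + n) + t by ring, hper, ih]
  have h1 : ∀ q, ∑ n ∈ Finset.range (t * q), a n = q * ∑ n ∈ Finset.range t, a n := by
    intro q
    induction q with
    | zero => simp
    | succ q ih =>
      rw [Nat.mul_succ, Finset.sum_range_add, ih]
      simp only [hperk]; push_cast; ring
  have h2 : N = t * (N / t) + N % t := (Nat.div_add_mod N t).symm
  have h3 : ∑ n ∈ Finset.range N, a n = ((N / t : ℕ) : ℂ) * ∑ n ∈ Finset.range t, a n +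
      ∑ n ∈ Finset.range (N % t), a (t * (N / t) + n) := by
    rw [← h1, ← Finset.sum_range_add, Nat.div_add_mod]
  rw [h3]
  refine (norm_add_le _ _).trans (add_le_add ?_ ?_)
  · rw [norm_mul]; simp
  · refine (norm_sum_le_of_le _ (fun n _ => ha _)).trans ?_
    simp only [Finset.sum_const, Finset.card_range, nsmul_eq_mul, mul_one]
    exact_mod_cast (Nat.mod_lt _ ht).le

lemma period_count {m p : ℕ} [Fact p.Prime] (u : ℕ → Fin (m+1) → ZMod p) (N t : ℕ) (ht : 0 < t)
    (hinj : Set.InjOn u (Finset.range N))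
    (hper : ∀ n, u (n + t) (Fin.last m) = u n (Fin.last m)) : N ≤ t * p ^ m := by
  classical
  have hmod : ∀ n, u n (Fin.last m) = u (n % t) (Fin.last m) := by
    intro n
    have : ∀ k r, u (r + t * k) (Fin.last m) = u r (Fin.last m) := by
      intro k r
      induction k with
      | zero => rfl
      | succ k ih => rw [Nat.mul_succ, ← add_assoc, hper, ih]
    conv_lhs => rw [← Nat.mod_add_div n t]
    rw [this]
  have := Finset.card_le_card_of_injOn (s := Finset.range N)
    (t := Finset.range t ×ˢ (Finset.univ : Finset (Fin m → ZMod p)))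
    (fun n => (n % t, (Fin.last m).removeNth (u n))) ?_ ?_
  · simpa [ZMod.card] using this
  · intro n _
    simp [Nat.mod_lt _ ht]
  · intro a ha b hb h
    simp only [Prod.mk.injEq] at h
    refine hinj ha hb ?_
    rw [← Fin.insertNth_self_removeNth (Fin.last m) (u a),
      ← Fin.insertNth_self_removeNth (Fin.last m) (u b), h.2, hmod a, hmod b, h.1]

theorem caseB (m : ℕ) (hm : 1 ≤ m) (ε : ℝ) (hε : 0 < ε) : ∃ δ c : ℝ, 0 < δ ∧ 0 < c ∧
    ∀ (p : ℕ) [Fact p.Prime] (g h : ZMod p), g ≠ 0 →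
      ∀ (β : ZMod p), β ≠ 0 →
      ∀ (N : ℕ), 0 < N → (p : ℝ) ^ ((m : ℝ) + ε) ≤ N →
      ∀ (w : ℕ → Fin (m+1) → ZMod p),
      (∀ n, w (n+1) (Fin.last m) = g * w n (Fin.last m) + h) →
      Set.InjOn w (Finset.range N) →
      ‖∑ n ∈ Finset.range N, (ZMod.stdAddChar (β * w n (Fin.last m)) : ℂ)‖ ≤
        c * N * (p : ℝ) ^ (-δ) := by
  classical
  obtain ⟨δ, hδ, hbgk⟩ := bgk ε hε
  refine ⟨min δ ε, 3, lt_min hδ hε, by norm_num, ?_⟩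
  intro p _ g h hg β hβ N hN hpN w hw hinj
  have hp2 : 2 ≤ p := (Fact.out : p.Prime).two_le
  have hp1 : (1 : ℝ) < p := by exact_mod_cast (by omega : 1 < p)
  have hp0 : (0 : ℝ) < p := by linarith
  have hNr : (0 : ℝ) < N := by exact_mod_cast hN
  obtain ⟨x, hx⟩ : ∃ x : ℕ → ZMod p, ∀ n, x n = w n (Fin.last m) := ⟨_, fun _ => rfl⟩
  have hxs : ∀ n, x (n+1) = g * x n + h := fun n => by rw [hx, hx, hw]
  simp only [← hx]
  -- any period is large
  have hbig : ∀ t, 0 < t → (∀ n, x (n + t) = x n) → (p : ℝ) ^ ε ≤ t := by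
    intro t ht hper
    have h1 := period_count w N t ht hinj (fun n => by rw [← hx, ← hx, hper])
    have h2 : (N : ℝ) ≤ t * (p : ℝ) ^ m := by exact_mod_cast h1
    rw [Real.rpow_add hp0, Real.rpow_natCast] at hpN
    have h3 : (p : ℝ) ^ ε * (p : ℝ) ^ m ≤ t * (p : ℝ) ^ m := by linarith [mul_comm ((p : ℝ) ^ ε) ((p : ℝ) ^ m)]
    exact le_of_mul_le_mul_right h3 (by positivity)
  have hnot1 : ¬ ∀ n, x (n + 1) = x n := by
    intro hh
    have := hbig 1 one_pos hh
    have h2 := Real.one_lt_rpow hp1 hε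
    push_cast at this; linarith
  have hna : ∀ n, ‖(ZMod.stdAddChar (β * x n) : ℂ)‖ ≤ 1 := fun n => by simp
  -- it suffices to find a good period
  have hfin : ∀ t, 0 < t → t ≤ p → (∀ n, x (n + t) = x n) →
      ‖∑ n ∈ Finset.range t, (ZMod.stdAddChar (β * x n) : ℂ)‖ ≤ 2 * t * (p : ℝ) ^ (-δ) →
      ‖∑ n ∈ Finset.range N, (ZMod.stdAddChar (β * x n) : ℂ)‖ ≤
        3 * N * (p : ℝ) ^ (-(min δ ε)) := by
    intro t ht htp hper hblock
    refine (block_bound _ hna t ht (fun n => by rw [hper]) N).trans ?_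
    have e1 : (p : ℝ) ^ (-δ) ≤ (p : ℝ) ^ (-(min δ ε)) :=
      Real.rpow_le_rpow_of_exponent_le hp1.le (neg_le_neg (min_le_left _ _))
    have e2 : (p : ℝ) ^ (-ε) ≤ (p : ℝ) ^ (-(min δ ε)) :=
      Real.rpow_le_rpow_of_exponent_le hp1.le (neg_le_neg (min_le_right _ _))
    have e3 : (p : ℝ) ≤ N * (p : ℝ) ^ (-ε) := by
      calc (p : ℝ) = (p : ℝ) ^ (1 : ℝ) := (Real.rpow_one _).symm
        _ ≤ (p : ℝ) ^ (m : ℝ) := Real.rpow_le_rpow_of_exponent_le hp1.le (by exact_mod_cast hm)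
        _ = (p : ℝ) ^ ((m : ℝ) + ε) * (p : ℝ) ^ (-ε) := by
          rw [← Real.rpow_add hp0]; congr 1; ring
        _ ≤ _ := by gcongr
    have e4 : (t : ℝ) ≤ p := by exact_mod_cast htp
    have e5 : ((N / t : ℕ) : ℝ) * t ≤ N := by exact_mod_cast Nat.div_mul_le_self N t
    calc ((N / t : ℕ) : ℝ) * ‖∑ n ∈ Finset.range t, (ZMod.stdAddChar (β * x n) : ℂ)‖ + t
        ≤ ((N / t : ℕ) : ℝ) * (2 * t * (p : ℝ) ^ (-δ)) + t := by gcongr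
      _ = 2 * (((N / t : ℕ) : ℝ) * t) * (p : ℝ) ^ (-δ) + t := by ring
      _ ≤ 2 * N * (p : ℝ) ^ (-(min δ ε)) + N * (p : ℝ) ^ (-(min δ ε)) := by
        refine add_le_add (by gcongr) ?_
        refine e4.trans (e3.trans (by gcongr))
      _ = _ := by ring
  by_cases hg1 : g = 1
  · subst hg1
    have hh : h ≠ 0 := by
      rintro rfl
      exact hnot1 fun n => by rw [hxs]; simp
    have hxn : ∀ n : ℕ, x n = x 0 + n * h := by
      intro n
      induction n with
      | zero => simp
      | succ n ih => rw [hxs, ih]; push_cast; ring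
    refine hfin p (by omega) le_rfl (fun n => by rw [hxn (n+p), hxn n]; simp) ?_
    have : ∑ n ∈ Finset.range p, (ZMod.stdAddChar (β * x n) : ℂ) = 0 := by
      have e1 : ∑ n ∈ Finset.range p, (ZMod.stdAddChar (β * x n) : ℂ) =
          ∑ z : ZMod p, (ZMod.stdAddChar (β * (x 0 + z * h)) : ℂ) := by
        refine Finset.sum_bij (fun n _ => (n : ZMod p)) (fun _ _ => Finset.mem_univ _) ?_ ?_ ?_
        · intro a ha b hb hab
          rw [ZMod.natCast_eq_natCast_iff] at hab
          exact Nat.ModEq.eq_of_lt_of_lt hab (Finset.mem_range.1 ha) (Finset.mem_range.1 hb)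
        · intro z _
          exact ⟨z.val, Finset.mem_range.2 (ZMod.val_lt z), ZMod.natCast_zmod_val z⟩
        · intro n _; rw [hxn n]
      rw [e1]
      have e2 := AddChar.sum_mulShift (β * h) (ZMod.isPrimitive_stdAddChar p)
      rw [if_neg (mul_ne_zero hβ hh)] at e2
      have e3 : ∀ z : ZMod p, (ZMod.stdAddChar (β * (x 0 + z * h)) : ℂ) =
          ZMod.stdAddChar (β * x 0) * ZMod.stdAddChar (z * (β * h)) := by
        intro z; rw [← AddChar.map_add_eq_mul]; congr 1; ring
      simp only [e3]
      rw [← Finset.mul_sum, e2]; simp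
    rw [this, norm_zero]; positivity
  · obtain ⟨y, hy⟩ : ∃ y : ZMod p, y = h / (1 - g) := ⟨_, rfl⟩
    have h1g : 1 - g ≠ 0 := sub_ne_zero.2 (Ne.symm hg1)
    have hyy : g * y + h = y := by
      rw [hy]; field_simp; ring
    have hxn : ∀ n : ℕ, x n = y + g ^ n * (x 0 - y) := by
      intro n
      induction n with
      | zero => simp
      | succ n ih => rw [hxs, ih, pow_succ]; linear_combination hyy
    have hx0 : x 0 - y ≠ 0 := by
      intro h0
      exact hnot1 fun n => by rw [hxn (n+1), hxn n, h0]; simp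
    have hfo : IsOfFinOrder g := by
      rw [isOfFinOrder_iff_pow_eq_one]
      exact ⟨p - 1, by omega, ZMod.pow_card_sub_one_eq_one hg⟩
    have ht : 0 < orderOf g := hfo.orderOf_pos
    have htp : orderOf g ≤ p :=
      (Nat.le_of_dvd (by omega) (orderOf_dvd_of_pow_eq_one (ZMod.pow_card_sub_one_eq_one hg))).trans
        (Nat.sub_le _ _)
    have hper : ∀ n, x (n + orderOf g) = x n := by
      intro n; rw [hxn (n + orderOf g), hxn n, pow_add, pow_orderOf_eq_one, mul_one]
    refine hfin _ ht htp hper ?_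
    obtain ⟨Hs, hHs⟩ : ∃ Hs : Finset (ZMod p),
      Hs = (Finset.range (orderOf g)).image (fun n => g ^ n) := ⟨_, rfl⟩
    have hinjp : Set.InjOn (fun n => g ^ n) (Finset.range (orderOf g)) := by
      intro a ha b hb hab
      exact pow_injOn_Iio_orderOf (by simpa using ha) (by simpa using hb) hab
    have hcard : Hs.card = orderOf g := by
      rw [hHs, Finset.card_image_of_injOn hinjp, Finset.card_range]
    have hmem : ∀ n : ℕ, g ^ n ∈ Hs := by
      intro n
      rw [hHs, Finset.mem_image]
      exact ⟨n % orderOf g, Finset.mem_range.2 (Nat.mod_lt _ ht), pow_mod_orderOf g n⟩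
    have hne : ∀ z ∈ Hs, z ≠ 0 := by
      intro z hz
      rw [hHs, Finset.mem_image] at hz
      obtain ⟨n, _, rfl⟩ := hz
      exact pow_ne_zero _ hg
    have hclosed : ∀ z ∈ Hs, Hs.image (fun y => z * y) = Hs := by
      intro z hz
      refine Finset.eq_of_subset_of_card_le ?_ ?_
      · intro a ha
        obtain ⟨y', hy', rfl⟩ := Finset.mem_image.1 ha
        rw [hHs, Finset.mem_image] at hz hy'
        obtain ⟨n, _, rfl⟩ := hz
        obtain ⟨n', _, rfl⟩ := hy'
        rw [← pow_add]; exact hmem _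
      · rw [Finset.card_image_of_injective _ (mul_right_injective₀ (hne z hz))]
    have hb := hbgk p Hs hne hclosed (by rw [hcard]; exact hbig _ ht hper) (β * (x 0 - y))
      (mul_ne_zero hβ hx0)
    rw [hcard] at hb
    refine le_trans (le_of_eq ?_) hb
    have e1 : ∑ n ∈ Finset.range (orderOf g), (ZMod.stdAddChar (β * x n) : ℂ) =
        ZMod.stdAddChar (β * y) * expS Hs (β * (x 0 - y)) := by
      rw [expS, hHs, Finset.sum_image hinjp, Finset.mul_sum]
      refine Finset.sum_congr rfl fun n _ => ?_
      rw [← AddChar.map_add_eq_mul, hxn n]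
      congr 1; ring
    rw [e1, norm_mul, AddChar.norm_apply, one_mul]

theorem stmt5 (m d : ℕ) (hm : 1 ≤ m) (hd : 2 ≤ d) (ε : ℝ) (hε : 0 < ε) :
    ∃ δ c : ℝ, 0 < δ ∧ 0 < c ∧
      ∀ (s : ℕ → ℕ → ℕ) (p : ℕ), p.Prime →
        ∀ F : Fin (m + 1) → MvPolynomial (Fin (m + 1)) (ZMod p),
          IsFSystem m s F →
          (Finset.univ.sup fun i => (F i).totalDegree) = d →
          (∏ i ∈ Finset.range m, s i (i + 1)) ≠ 0 →
          ∀ (u : ℕ → Fin (m + 1) → ZMod p) (τ : ℕ),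
            (∀ n i, u (n + 1) i = MvPolynomial.eval (u n) (F i)) →
            0 < τ → (∀ n, u (n + τ) = u n) →
            (∀ t, 0 < t → (∀ n, u (n + t) = u n) → τ ≤ t) →
            ∀ N : ℕ, 0 < N → N ≤ τ → (p : ℝ) ^ ((m : ℝ) + ε) ≤ (N : ℝ) →
              ∀ b : Fin (m + 1) → ZMod p, b ≠ 0 →
                ‖∑ n ∈ Finset.range N, eP p (∑ i : Fin (m + 1), b i * u n i)‖ ≤
                  c * (N : ℝ) * (p : ℝ) ^ (-δ) := by
  classical
  obtain ⟨δ₁, c₁, hδ₁, hc₁, hA⟩ := TriSys.caseA m d ε hε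
  obtain ⟨δ₂, c₂, hδ₂, hc₂, hB⟩ := caseB m hm ε hε
  refine ⟨min δ₁ δ₂, c₁ + c₂, lt_min hδ₁ hδ₂, by positivity, ?_⟩
  intro s p hp F hF hdeg hs u τ hu hτ hper hmin N hN hNτ hpN b hb
  haveI : Fact p.Prime := ⟨hp⟩
  have hp1 : (1 : ℝ) ≤ p := by exact_mod_cast hp.one_lt.le
  have hNr : (0 : ℝ) < N := by exact_mod_cast hN
  simp only [eP_eq]
  have hstep : ∀ n, u (n+1) = (fun v i => MvPolynomial.eval v (F i)) (u n) :=
    fun n => funext fun i => hu n i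
  have hinj : Set.InjOn u (Finset.range N) := by
    refine (inj_of_period (fun v i => MvPolynomial.eval v (F i)) u hstep τ hτ hper hmin).mono ?_
    exact_mod_cast Finset.range_subset_range.2 hNτ
  have e1 : (p : ℝ) ^ (-δ₁) ≤ (p : ℝ) ^ (-(min δ₁ δ₂)) :=
    Real.rpow_le_rpow_of_exponent_le hp1 (neg_le_neg (min_le_left _ _))
  have e2 : (p : ℝ) ^ (-δ₂) ≤ (p : ℝ) ^ (-(min δ₁ δ₂)) :=
    Real.rpow_le_rpow_of_exponent_le hp1 (neg_le_neg (min_le_right _ _))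
  have f1 : c₁ * N * (p : ℝ) ^ (-δ₁) ≤ (c₁ + c₂) * N * (p : ℝ) ^ (-(min δ₁ δ₂)) := by
    gcongr; linarith
  have f2 : c₂ * N * (p : ℝ) ^ (-δ₂) ≤ (c₁ + c₂) * N * (p : ℝ) ^ (-(min δ₁ δ₂)) := by
    gcongr; linarith
  by_cases hcase : ∃ i : Fin m, b i.castSucc ≠ 0
  · obtain ⟨G, H, T⟩ := triSys_of s F hF hdeg hs
    obtain ⟨i, hi, hlt⟩ : ∃ i : Fin m, b i.castSucc ≠ 0 ∧ ∀ j < i, b j.castSucc = 0 := by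
      have hne : (Finset.univ.filter (fun i : Fin m => b i.castSucc ≠ 0)).Nonempty := by
        obtain ⟨i, hi⟩ := hcase
        exact ⟨i, by simp [hi]⟩
      refine ⟨Finset.min' _ hne, ?_, fun j hj => ?_⟩
      · exact (Finset.mem_filter.1 (Finset.min'_mem _ hne)).2
      · by_contra h
        exact absurd (Finset.min'_le _ j (by simp [h])) (not_le.2 hj)
    refine (hA p _ G H T b i ?_ hi N hN hpN u hstep hinj).trans f1
    intro j hj
    have hjl : j ≠ Fin.last m := (hj.trans (Fin.castSucc_lt_last i)).ne
    obtain ⟨j', rfl⟩ : ∃ j' : Fin m, j'.castSucc = j := Fin.exists_castSucc_eq.2 hjl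
    exact hlt j' (by simpa using hj)
  · push Not at hcase
    have hbl : b (Fin.last m) ≠ 0 := by
      intro h0
      apply hb
      funext i
      induction i using Fin.lastCases with
      | last => exact h0
      | cast i => exact hcase i
    obtain ⟨g, h, hg, hFl⟩ := hF.1
    have hsum : ∀ n, ∑ i, b i * u n i = b (Fin.last m) * u n (Fin.last m) := by
      intro n
      rw [Fin.sum_univ_castSucc]
      simp [hcase]
    simp only [hsum]
    refine (hB p g h hg (b (Fin.last m)) hbl N hN hpN u ?_ hinj).trans f2
    intro n
    rw [hu, hFl]; simp
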